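/- arXiv:1011.6195 — 2 statements merged into one kernel-verified Lean document; each statement's English description precedes it below -/
import Mathlib

section
/- There exist an angle θ₀ ∈ (0, π/2) and a radius r₀ > 0 such that for every complex q = 1/2 + r e^{iθ} with 0 < r < r₀ and θ₀ < θ < 2π - θ₀, the analytic continuation of PA satisfies PA(q) = D(q) - q² A(q) · ( (a(q);q)_∞ (v(q);q)_∞ / ((q;q)_∞ (a(q)v(q);q)_∞) ) · [ exp(-γ(q)·Log(1-2q)) · Π( Log(1-2q)/log(1/q) ) · U(q) + V(q) ], where Log denotes the principal branch of the logarithm and all series involved converge absolutely for such q. -/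
open Complex Filter Asymptotics Topology

noncomputable section

/-- finite q-Pochhammer symbol `(x;q)_n` -/
def qPF (x q : ℂ) (n : ℕ) : ℂ := ∏ i ∈ Finset.range n, (1 - x * q ^ i)

/-- infinite q-Pochhammer symbol `(x;q)_∞` -/
def qPI (x q : ℂ) : ℂ := ∏' i : ℕ, (1 - x * q ^ i)

def uF (q : ℂ) : ℂ := q / (1 - q)
def vF (q : ℂ) : ℂ := (1 - q + q ^ 2) / (1 - q)
def aF (q : ℂ) : ℂ := q ^ 2 / (1 - q + q ^ 2)
def AF (q : ℂ) : ℂ := 2 * q * (1 - q) ^ 2 / (1 - 2 * q) ^ 2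
def CF (q : ℂ) : ℂ := 2 * q * (3 - 10 * q + 9 * q ^ 2 - q ^ 3) / ((1 - q) * (1 - 2 * q) ^ 2)
def DF (q : ℂ) : ℂ := CF q - (q ^ 2 / (1 - q) ^ 2) * AF q * qPI (vF q) q / qPI (aF q * vF q) q

/-- the `m`-th term (for `m ≥ 1`) of the explicit series for `PA(q)` -/
def PAterm (q : ℂ) (m : ℕ) : ℂ :=
  (-1) ^ m * q ^ (2 * m) / ((1 - 2 * q) ^ m * (1 - q - q ^ (m + 1))) *
    ∏ k ∈ Finset.Icc 1 (m - 1),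
      ((1 - q - q ^ k + q ^ (k + 1) - q ^ (k + 2)) / (1 - q - q ^ (k + 1)))

/-- the explicit convergent series defining `PA(q)` for small `q` -/
def PAseries (q : ℂ) : ℂ :=
  (-2 * q ^ 3 * (1 - q) ^ 2 / (1 - 2 * q) ^ 2) * (∑' m : ℕ, PAterm q (m + 1))
    + 2 * q * (3 - 10 * q + 9 * q ^ 2 - q ^ 3) / ((1 - 2 * q) ^ 2 * (1 - q))

/-- the slit disc `D₀ = {q : |q| < 55/100, q ∉ [1/2, 55/100]}` -/
def slitDisc : Set ℂ :=
  {q : ℂ | ‖q‖ < 55 / 100 ∧ ¬∃ x : ℝ, 1 / 2 ≤ x ∧ x ≤ 55 / 100 ∧ q = (x : ℂ)}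

/-- `γ(q) = log v(q)/log(1/q)`, principal branches -/
def gammaC (q : ℂ) : ℂ := Complex.log (vF q) / Complex.log (1 / q)

/-- the Fourier coefficient `p_k = π / sin(πγ(q) + 2ikπ²/log(1/q))` -/
def pcoefC (q : ℂ) (k : ℤ) : ℂ :=
  (Real.pi : ℂ) / Complex.sin ((Real.pi : ℂ) * gammaC q +
    2 * Complex.I * (k : ℂ) * (Real.pi : ℂ) ^ 2 / Complex.log (1 / q))

/-- the Fourier series `Π(w) = ∑_{k∈ℤ} p_k e^{-2πikw}` -/
def PiC (q : ℂ) (w : ℂ) : ℂ :=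
  ∑' k : ℤ, pcoefC q k * Complex.exp (-2 * (Real.pi : ℂ) * Complex.I * (k : ℂ) * w)

/-- the singular series `U(q) = (v(q) q^{3γ-2}/log(1/q))·(-q⁻¹t;q)_∞/(-a q⁻²t;q)_∞`,
`t = 1-2q`, principal powers -/
def UfunC (q : ℂ) : ℂ :=
  vF q * q ^ (3 * gammaC q - 2) / Complex.log (1 / q) *
    (qPI (-(q⁻¹ * (1 - 2 * q))) q / qPI (-(aF q * q⁻¹ ^ 2 * (1 - 2 * q))) q)

/-- the `r`-th term of the series in the regular series `V(q)` -/
def VtermC (q : ℂ) (r : ℕ) : ℂ :=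
  (qPF ((aF q)⁻¹ * (vF q)⁻¹ * q) q r / qPF ((vF q)⁻¹ * q) q r) *
    (-(aF q) * (1 - 2 * q) / q ^ 2) ^ r

/-- the regular series `V(q)` -/
def VfunC (q : ℂ) : ℂ :=
  -(qPI q q / qPI (aF q) q) * ((1 / q ^ 2) / (1 + (1 - 2 * q) / q ^ 2)) +
    (1 / q ^ 2) * (qPI q q * qPI (aF q * vF q) q / (qPI (aF q) q * qPI (vF q) q)) *
      ∑' r : ℕ, VtermC q r


section

lemma norm_pow_lt_one_aux {q : ℂ} (hq : ‖q‖ < 1) (i : ℕ) : ‖q ^ (i + 1)‖ < 1 := by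
  rw [norm_pow]; exact pow_lt_one₀ (norm_nonneg _) hq (by omega)

lemma one_sub_pow_ne {q : ℂ} (hq : ‖q‖ < 1) (i : ℕ) : (1 : ℂ) - q ^ (i + 1) ≠ 0 := by
  intro h
  have h1 := norm_pow_lt_one_aux hq i
  rw [← sub_eq_zero.mp h] at h1
  simp at h1

lemma qPI_multipliable (x : ℂ) {q : ℂ} (hq : ‖q‖ < 1) :
    Multipliable (fun i : ℕ => (1 - x * q ^ i)) := by
  have : Summable (fun i : ℕ => ‖-(x * q ^ i)‖) := by
    simp only [norm_neg, norm_mul, norm_pow]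
    exact (summable_geometric_of_lt_one (norm_nonneg _) hq).mul_left _
  simpa [sub_eq_add_neg] using multipliable_one_add_of_summable this

lemma qPI_tendsto (x : ℂ) {q : ℂ} (hq : ‖q‖ < 1) :
    Tendsto (fun n => qPF x q n) atTop (𝓝 (qPI x q)) :=
  (qPI_multipliable x hq).hasProd.tendsto_prod_nat

lemma qPF_succ (x q : ℂ) (n : ℕ) : qPF x q (n + 1) = qPF x q n * (1 - x * q ^ n) := by
  simp [qPF, Finset.prod_range_succ]

lemma qPF_succ' (x q : ℂ) (n : ℕ) : qPF x q (n + 1) = (1 - x) * qPF (x * q) q n := by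
  simp only [qPF, Finset.prod_range_succ', pow_zero, mul_one]
  rw [mul_comm]
  congr 1
  exact Finset.prod_congr rfl fun i _ => by ring

lemma qPF_add (x q : ℂ) (m n : ℕ) : qPF x q (m + n) = qPF x q m * qPF (x * q ^ m) q n := by
  simp only [qPF, Finset.prod_range_add]
  congr 1
  exact Finset.prod_congr rfl fun i _ => by ring

lemma qPI_split (x : ℂ) {q : ℂ} (hq : ‖q‖ < 1) (m : ℕ) :
    qPI x q = qPF x q m * qPI (x * q ^ m) q := by
  have h1 := (qPI_tendsto (x * q ^ m) hq).const_mul (qPF x q m)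
  have h2 := (tendsto_add_atTop_iff_nat m).mpr (qPI_tendsto x hq)
  refine tendsto_nhds_unique h2 (h1.congr fun n => ?_)
  rw [← qPF_add, add_comm]

lemma qPI_step (x : ℂ) {q : ℂ} (hq : ‖q‖ < 1) : qPI x q = (1 - x) * qPI (x * q) q := by
  have := qPI_split x hq 1
  simpa [qPF] using this

lemma qPI_zero (q : ℂ) : qPI 0 q = 1 := by simp [qPI]

/-- homogeneous q-binomial coefficient -/
def qB (x y q : ℂ) (n : ℕ) : ℂ := ∏ i ∈ Finset.range n, ((x - y * q ^ i) / (1 - q ^ (i + 1)))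

def qM (X Y Q : ℝ) (n : ℕ) : ℝ := ∏ i ∈ Finset.range n, ((X + Y * Q ^ i) / (1 - Q ^ (i + 1)))

lemma qM_summable {X Y Q : ℝ} (hX : 0 < X) (hX1 : X < 1) (hY : 0 ≤ Y) (hQ : 0 ≤ Q) (hQ1 : Q < 1) :
    Summable (qM X Y Q) := by
  have hQi : ∀ i : ℕ, 0 < 1 - Q ^ (i + 1) := fun i => by
    have := pow_lt_one₀ hQ hQ1 (n := i + 1) (by omega); linarith
  have hpos : ∀ n, 0 < qM X Y Q n := fun n => by
    refine Finset.prod_pos fun i _ => div_pos ?_ (hQi i)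
    have : 0 ≤ Y * Q ^ i := by positivity
    linarith
  refine summable_of_ratio_test_tendsto_lt_one hX1 (Eventually.of_forall fun n => (hpos n).ne') ?_
  have h0 : Tendsto (fun n : ℕ => Q ^ n) atTop (𝓝 0) := tendsto_pow_atTop_nhds_zero_of_lt_one hQ hQ1
  have h1 : Tendsto (fun n : ℕ => Q ^ (n + 1)) atTop (𝓝 0) := (tendsto_add_atTop_iff_nat 1).mpr h0
  have h2 : Tendsto (fun n : ℕ => (X + Y * Q ^ n) / (1 - Q ^ (n + 1))) atTop (𝓝 ((X + Y * 0) / (1 - 0))) :=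
    ((h0.const_mul Y).const_add X).div (h1.const_sub 1) (by norm_num)
  simp only [mul_zero, add_zero, sub_zero, div_one] at h2
  refine h2.congr fun n => ?_
  rw [Real.norm_of_nonneg (hpos _).le, Real.norm_of_nonneg (hpos _).le]
  have := (hpos n).ne'
  rw [eq_div_iff this]
  simp only [qM, Finset.prod_range_succ]
  rw [mul_comm]

lemma qB_norm_le {x y q : ℂ} {X Y Q : ℝ} (hx : ‖x‖ ≤ X) (hy : ‖y‖ ≤ Y) (hq : ‖q‖ ≤ Q) (hQ1 : Q < 1)
    (n : ℕ) : ‖qB x y q n‖ ≤ qM X Y Q n := by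
  have hQ : 0 ≤ Q := (norm_nonneg _).trans hq
  have hY : 0 ≤ Y := (norm_nonneg _).trans hy
  rw [qB, qM, norm_prod]
  refine Finset.prod_le_prod (fun _ _ => norm_nonneg _) fun i _ => ?_
  rw [norm_div]
  have h1 : 0 < 1 - Q ^ (i + 1) := by
    have := pow_lt_one₀ hQ hQ1 (n := i + 1) (by omega); linarith
  refine div_le_div₀ ?_ ?_ h1 ?_
  · have : 0 ≤ X := (norm_nonneg _).trans hx
    positivity
  · refine (norm_sub_le _ _).trans ?_
    rw [norm_mul, norm_pow]
    gcongr
  · have h2 := norm_sub_norm_le (1 : ℂ) (q ^ (i + 1))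
    rw [norm_one, norm_pow] at h2
    have : ‖q‖ ^ (i + 1) ≤ Q ^ (i + 1) := by gcongr
    linarith

lemma qB_summable_norm {x q : ℂ} (y : ℂ) (hx : ‖x‖ < 1) (hq : ‖q‖ < 1) :
    Summable (fun n => ‖qB x y q n‖) := by
  obtain ⟨X, hX, hX1⟩ := exists_between hx
  exact Summable.of_nonneg_of_le (fun _ => norm_nonneg _)
    (qB_norm_le hX.le le_rfl le_rfl hq)
    (qM_summable ((norm_nonneg _).trans_lt hX) hX1 (norm_nonneg _) (norm_nonneg _) hq)

lemma qB_summable {x q : ℂ} (y : ℂ) (hx : ‖x‖ < 1) (hq : ‖q‖ < 1) :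
    Summable (fun n => qB x y q n) := (qB_summable_norm y hx hq).of_norm

lemma qB_scale (x y q s : ℂ) (n : ℕ) : qB (x * s) (y * s) q n = qB x y q n * s ^ n := by
  rw [qB, qB, show s ^ n = ∏ i ∈ Finset.range n, s by simp, ← Finset.prod_mul_distrib]
  exact Finset.prod_congr rfl fun i _ => by ring

lemma qB_zero (x y q : ℂ) : qB x y q 0 = 1 := by simp [qB]

lemma qB_succ (x y : ℂ) {q : ℂ} (hq : ‖q‖ < 1) (n : ℕ) :
    (1 - q ^ (n + 1)) * qB x y q (n + 1) = (x - y * q ^ n) * qB x y q n := by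
  have := one_sub_pow_ne hq n
  simp only [qB, Finset.prod_range_succ]
  field_simp

/-- functional equation -/
lemma qB_sum_step {x q : ℂ} (y : ℂ) (hx : ‖x‖ < 1) (hq : ‖q‖ < 1) :
    (1 - x) * ∑' n, qB x y q n = (1 - y) * ∑' n, qB (x * q) (y * q) q n := by
  have hs := qB_summable y hx hq
  have hxq : ‖x * q‖ < 1 := by
    rw [norm_mul]; exact mul_lt_one_of_nonneg_of_lt_one_left (norm_nonneg _) hx hq.le
  have hs2 := qB_summable (y * q) hxq hq
  have e1 : ∑' n, qB x y q n - ∑' n, qB (x * q) (y * q) q n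
      = ∑' n, (x - y * q ^ n) * qB x y q n := by
    rw [← hs.tsum_sub hs2]
    rw [(hs.sub hs2).tsum_eq_zero_add]
    simp only [qB_zero, sub_self, zero_add]
    refine tsum_congr fun n => ?_
    rw [← qB_succ x y hq n, qB_scale]; ring
  have e2 : ∑' n, (x - y * q ^ n) * qB x y q n
      = x * ∑' n, qB x y q n - y * ∑' n, qB (x * q) (y * q) q n := by
    rw [← tsum_mul_left, ← tsum_mul_left, ← (hs.mul_left x).tsum_sub (hs2.mul_left y)]
    refine tsum_congr fun n => ?_
    rw [qB_scale]; ring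
  linear_combination e1 + e2

lemma qB_sum_iter {x q : ℂ} (y : ℂ) (hx : ‖x‖ < 1) (hq : ‖q‖ < 1) (N : ℕ) :
    qPF x q N * ∑' n, qB x y q n = qPF y q N * ∑' n, qB (x * q ^ N) (y * q ^ N) q n := by
  induction N with
  | zero => simp [qPF]
  | succ N ih =>
    have hxq : ‖x * q ^ N‖ < 1 := by
      rw [norm_mul, norm_pow]
      exact mul_lt_one_of_nonneg_of_lt_one_left (norm_nonneg _) hx
        (pow_le_one₀ (norm_nonneg _) hq.le)
    have := qB_sum_step (y * q ^ N) hxq hq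
    rw [qPF_succ, qPF_succ, pow_succ, ← mul_assoc, ← mul_assoc]
    linear_combination (1 - x * q ^ N) * ih + qPF y q N * this

lemma qbinomial_mul {x q : ℂ} (y : ℂ) (hx : ‖x‖ < 1) (hq : ‖q‖ < 1) :
    qPI x q * ∑' n, qB x y q n = qPI y q := by
  have h1 := (qPI_tendsto x hq).mul_const (∑' n, qB x y q n)
  have h3 : Tendsto (fun N : ℕ => ∑' n, qB (x * q ^ N) (y * q ^ N) q n) atTop
      (𝓝 (∑' n, (if n = 0 then (1 : ℂ) else 0))) := by
    refine tendsto_tsum_of_dominated_convergence (bound := fun n => ‖qB x y q n‖)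
      (qB_summable_norm y hx hq) (fun n => ?_) (Eventually.of_forall fun N n => ?_)
    · simp only [qB_scale]
      rcases Nat.eq_zero_or_pos n with rfl | hn
      · simp [qB_zero]
      · simp only [hn.ne', if_false]
        have : Tendsto (fun N : ℕ => (q ^ N) ^ n) atTop (𝓝 (0 ^ n)) :=
          (tendsto_pow_atTop_nhds_zero_of_norm_lt_one hq).pow n
        rw [zero_pow hn.ne'] at this
        simpa using this.const_mul (qB x y q n)
    · rw [qB_scale, norm_mul, norm_pow, norm_pow]
      exact mul_le_of_le_one_right (norm_nonneg _)
        (pow_le_one₀ (by positivity) (pow_le_one₀ (norm_nonneg _) hq.le))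
  rw [tsum_ite_eq] at h3
  have h2 := (qPI_tendsto y hq).mul h3
  rw [mul_one] at h2
  exact tendsto_nhds_unique h1 (h2.congr fun N => (qB_sum_iter y hx hq N).symm)

lemma qPI_ne_zero {x q : ℂ} (hx : ‖x‖ < 1) (hq : ‖q‖ < 1) : qPI x q ≠ 0 := by
  intro h
  have := qbinomial_mul 0 hx hq
  rw [h, qPI_zero] at this
  simp at this

lemma qbinomial {x q : ℂ} (y : ℂ) (hx : ‖x‖ < 1) (hq : ‖q‖ < 1) :
    ∑' n, qB x y q n = qPI y q / qPI x q := by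
  rw [eq_div_iff (qPI_ne_zero hx hq), mul_comm, qbinomial_mul y hx hq]

lemma qbinomial_hasSum {x q : ℂ} (y : ℂ) (hx : ‖x‖ < 1) (hq : ‖q‖ < 1) :
    HasSum (fun n => qB x y q n) (qPI y q / qPI x q) := by
  rw [← qbinomial y hx hq]; exact (qB_summable y hx hq).hasSum

end


section

/-- the analytic continuation -/
def fF (q : ℂ) : ℂ :=
  CF q + q ^ 4 * AF q / (1 - q) * (∑' n, qB (uF q * q) (vF q * q) q n) *
    ∑' n, qB (vF q * q) (uF q * q ^ 2) q n * (1 / (1 - 2 * q + q ^ (n + 2)))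

lemma nat_mul_pow_lt (N : ℕ) : (N : ℝ) * (55 / 100) ^ (N - 1) < 2 := by
  rcases N with _ | N
  · simp
  · simp only [Nat.add_sub_cancel]
    induction N with
    | zero => norm_num
    | succ N ih =>
      rcases N with _ | N
      · norm_num
      · refine lt_of_le_of_lt ?_ ih
        push_cast
        rw [pow_succ ((55 : ℝ) / 100) (N + 1)]
        have h : 0 < ((55 : ℝ) / 100) ^ (N + 1) := by positivity
        have hN : (0 : ℝ) ≤ N := Nat.cast_nonneg N
        nlinarith

lemma root_in_slit {q : ℂ} (hq : q ∈ slitDisc) (n : ℕ) : 1 - 2 * q + q ^ (n + 2) ≠ 0 := by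
  intro h
  obtain ⟨hq1, hq2⟩ := hq
  set c := (starRingEnd ℂ) q with hc
  have hcn : ‖c‖ = ‖q‖ := by simp [hc]
  have h' : 1 - 2 * c + c ^ (n + 2) = 0 := by
    have := congrArg (starRingEnd ℂ) h
    simp only [map_add, map_sub, map_mul, map_pow, map_one, map_zero, Complex.conj_ofNat] at this
    exact this
  have hreal : c = q := by
    by_contra hne
    have hs : (∑ i ∈ Finset.range (n + 2), q ^ i * c ^ (n + 2 - 1 - i)) * (q - c)
        = q ^ (n + 2) - c ^ (n + 2) := (Commute.all q c).geom_sum₂_mul (n + 2)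
    have h2 : (∑ i ∈ Finset.range (n + 2), q ^ i * c ^ (n + 2 - 1 - i)) = 2 := by
      apply mul_right_cancel₀ (sub_ne_zero.mpr (Ne.symm hne))
      rw [hs]; linear_combination h - h'
    have h3 : ‖∑ i ∈ Finset.range (n + 2), q ^ i * c ^ (n + 2 - 1 - i)‖
        ≤ ∑ i ∈ Finset.range (n + 2), ‖q‖ ^ (n + 1) := by
      refine (norm_sum_le _ _).trans (Finset.sum_le_sum fun i hi => ?_)
      rw [norm_mul, norm_pow, norm_pow, hcn, ← pow_add]
      have := Finset.mem_range.mp hi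
      rw [show i + (n + 2 - 1 - i) = n + 1 by omega]
    rw [h2, Finset.sum_const, Finset.card_range, nsmul_eq_mul] at h3
    have h4 := nat_mul_pow_lt (n + 2)
    have h5 : ‖q‖ ^ (n + 1) ≤ (55 / 100) ^ (n + 1) := by gcongr
    have h6 : ((n + 2 : ℕ) : ℝ) * ‖q‖ ^ (n + 1) ≤ ((n + 2 : ℕ) : ℝ) * (55 / 100) ^ (n + 1) := by
      gcongr
    simp only [show n + 2 - 1 = n + 1 by omega] at h4
    norm_num at h3
    push_cast at h4 h6
    norm_num at h4 h6
    linarith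
  obtain ⟨x, hx⟩ := Complex.conj_eq_iff_real.mp hreal
  have hxabs : |x| < 55 / 100 := by rw [hx] at hq1; simpa using hq1
  rw [hx] at h
  have hr : 1 - 2 * x + x ^ (n + 2) = 0 := by exact_mod_cast h
  have hx1 : |x ^ (n + 2)| < 1 := by
    rw [abs_pow]; exact pow_lt_one₀ (abs_nonneg _) (by linarith) (by omega)
  have hx0 : 0 < x := by have := (abs_lt.mp hx1).1; linarith
  have hx2 : 0 < x ^ (n + 2) := by positivity
  exact hq2 ⟨x, by linarith, (le_abs_self x).trans hxabs.le, hx⟩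

lemma half_not_slit {q : ℂ} (hq : q ∈ slitDisc) : 1 - 2 * q ≠ 0 := by
  intro h
  refine hq.2 ⟨1 / 2, le_rfl, by norm_num, ?_⟩
  push_cast
  linear_combination -h / 2

lemma slit_isOpen : IsOpen slitDisc := by
  have h : slitDisc = Metric.ball (0 : ℂ) (55 / 100) ∩
      ((fun x : ℝ => (x : ℂ)) '' Set.Icc (1 / 2) (55 / 100))ᶜ := by
    ext q
    simp only [slitDisc, Set.mem_ofPred_eq, Set.mem_inter_iff, mem_ball_zero_iff, Set.mem_compl_iff,
      Set.mem_image, Set.mem_Icc]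
    constructor
    · rintro ⟨h1, h2⟩
      exact ⟨h1, fun ⟨x, hx, e⟩ => h2 ⟨x, hx.1, hx.2, e.symm⟩⟩
    · rintro ⟨h1, h2⟩
      exact ⟨h1, fun ⟨x, hx, hx', e⟩ => h2 ⟨x, ⟨hx, hx'⟩, e.symm⟩⟩
  rw [h]
  exact Metric.isOpen_ball.inter
    ((isCompact_Icc.image Complex.continuous_ofReal).isClosed.isOpen_compl)

lemma one_sub_ge {q : ℂ} (hq : ‖q‖ < 55 / 100) : 45 / 100 ≤ ‖1 - q‖ := by
  have := norm_sub_norm_le (1 : ℂ) q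
  rw [norm_one] at this
  linarith

lemma one_sub_ne {q : ℂ} (hq : ‖q‖ < 1) : 1 - q ≠ 0 := by
  simpa using one_sub_pow_ne hq 0

lemma u_bound {q : ℂ} (hq : ‖q‖ < 55 / 100) : ‖uF q‖ ≤ 55 / 45 := by
  rw [uF, norm_div]
  calc ‖q‖ / ‖1 - q‖ ≤ (55 / 100) / (45 / 100) := by
        gcongr
        exact one_sub_ge hq
    _ = _ := by norm_num

lemma uq_bound {q : ℂ} (hq : ‖q‖ < 55 / 100) : ‖uF q * q‖ ≤ 68 / 100 := by
  rw [norm_mul]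
  calc ‖uF q‖ * ‖q‖ ≤ (55 / 45) * (55 / 100) := by
        gcongr
        exact u_bound hq
    _ ≤ _ := by norm_num

lemma v_bound {q : ℂ} (hq : ‖q‖ < 55 / 100) : ‖vF q‖ ≤ 168 / 100 := by
  have h : vF q = 1 + uF q * q := by
    have := one_sub_ne (q := q) (by linarith)
    rw [vF, uF]; field_simp
  rw [h]
  refine (norm_add_le _ _).trans ?_
  have := uq_bound hq
  rw [norm_one]; linarith

lemma vq_bound {q : ℂ} (hq : ‖q‖ < 55 / 100) : ‖vF q * q‖ ≤ 93 / 100 := by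
  rw [norm_mul]
  calc ‖vF q‖ * ‖q‖ ≤ (168 / 100) * (55 / 100) := by
        gcongr
        exact v_bound hq
    _ ≤ _ := by norm_num

lemma uqq_bound {q : ℂ} (hq : ‖q‖ < 55 / 100) : ‖uF q * q ^ 2‖ ≤ 1 := by
  rw [pow_two, ← mul_assoc, norm_mul]
  have := uq_bound hq
  nlinarith [norm_nonneg q, norm_nonneg (uF q * q)]

lemma uF_diff {q : ℂ} (hq : ‖q‖ < 55 / 100) : DifferentiableAt ℂ uF q := by
  have := one_sub_ne (q := q) (by linarith)
  unfold uF
  fun_prop (disch := assumption)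

lemma vF_diff {q : ℂ} (hq : ‖q‖ < 55 / 100) : DifferentiableAt ℂ vF q := by
  have := one_sub_ne (q := q) (by linarith)
  unfold vF
  fun_prop (disch := assumption)

lemma qB_diff {x y : ℂ → ℂ} {q : ℂ} (hq : ‖q‖ < 1) (hx : DifferentiableAt ℂ x q)
    (hy : DifferentiableAt ℂ y q) (n : ℕ) : DifferentiableAt ℂ (fun q => qB (x q) (y q) q n) q := by
  unfold qB
  refine DifferentiableAt.fun_finsetProd fun i _ => ?_
  have := one_sub_pow_ne hq i
  fun_prop (disch := assumption)

lemma den_lower {q₀ : ℂ} (hq : q₀ ∈ slitDisc) :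
    ∃ c > 0, ∀ᶠ q in 𝓝 q₀, ∀ n : ℕ, c ≤ ‖1 - 2 * q + q ^ (n + 2)‖ := by
  have ht := norm_pos_iff.mpr (half_not_slit hq)
  set δ := ‖1 - 2 * q₀‖ with hδ
  obtain ⟨N, hN⟩ := exists_pow_lt_of_lt_one (show 0 < δ / 4 by positivity)
    (show (55 / 100 : ℝ) < 1 by norm_num)
  have hc1 : ∀ᶠ q in 𝓝 q₀, δ / 2 < ‖1 - 2 * q‖ := by
    have : ContinuousAt (fun q : ℂ => ‖1 - 2 * q‖) q₀ := by fun_prop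
    exact this.eventually (lt_mem_nhds (show δ / 2 < ‖1 - 2 * q₀‖ by linarith))
  have hc2 : ∀ n : ℕ, ∃ c > 0, ∀ᶠ q in 𝓝 q₀, c ≤ ‖1 - 2 * q + q ^ (n + 2)‖ := fun n => by
    have h0 := norm_pos_iff.mpr (root_in_slit hq n)
    have : ContinuousAt (fun q : ℂ => ‖1 - 2 * q + q ^ (n + 2)‖) q₀ := by fun_prop
    refine ⟨_, half_pos h0, ?_⟩
    filter_upwards [this.eventually (lt_mem_nhds (half_lt_self h0))] with q hq using hq.le
  choose c hc hc' using hc2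
  have hne : (Finset.range (N + 1)).Nonempty := ⟨0, by simp⟩
  refine ⟨min (δ / 4) ((Finset.range (N + 1)).inf' hne c), ?_, ?_⟩
  · refine lt_min (by positivity) ?_
    rw [Finset.lt_inf'_iff]
    exact fun i _ => hc i
  · have h3 : ∀ᶠ q in 𝓝 q₀, ∀ n ∈ Finset.range (N + 1), c n ≤ ‖1 - 2 * q + q ^ (n + 2)‖ := by
      rw [Filter.eventually_all_finset]
      exact fun n _ => hc' n
    have h4 : ∀ᶠ q in 𝓝 q₀, q ∈ slitDisc := slit_isOpen.mem_nhds hq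
    filter_upwards [hc1, h3, h4] with q h1 h3 h4 n
    by_cases hn : n < N + 1
    · exact (min_le_right _ _).trans ((Finset.inf'_le _ (Finset.mem_range.mpr hn)).trans
        (h3 n (Finset.mem_range.mpr hn)))
    · refine (min_le_left _ _).trans ?_
      have e1 : ‖q ^ (n + 2)‖ ≤ (55 / 100) ^ N := by
        rw [norm_pow]
        calc ‖q‖ ^ (n + 2) ≤ (55 / 100) ^ (n + 2) := by
              have := h4.1
              gcongr
          _ ≤ _ := pow_le_pow_of_le_one (by norm_num) (by norm_num) (by omega)
      have e2 := norm_sub_norm_le (1 - 2 * q) (-(q ^ (n + 2)))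
      rw [norm_neg, sub_neg_eq_add] at e2
      linarith

lemma sum1_analytic {q₀ : ℂ} (hq : q₀ ∈ slitDisc) :
    AnalyticAt ℂ (fun q => ∑' n, qB (uF q * q) (vF q * q) q n) q₀ := by
  have hd : DifferentiableOn ℂ (fun q => ∑' n, qB (uF q * q) (vF q * q) q n) slitDisc := by
    refine differentiableOn_tsum_of_summable_norm
      (qM_summable (X := 68 / 100) (Y := 93 / 100) (Q := 55 / 100) (by norm_num) (by norm_num)
        (by norm_num) (by norm_num) (by norm_num)) (fun n q hq => ?_) slit_isOpen (fun n q hq => ?_)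
    · have h1 := hq.1
      exact (qB_diff (by linarith) ((uF_diff h1).mul differentiableAt_fun_id)
        ((vF_diff h1).mul differentiableAt_fun_id) n).differentiableWithinAt
    · have h1 := hq.1
      exact qB_norm_le (uq_bound h1) (vq_bound h1) h1.le (by norm_num) n
  exact hd.analyticAt (slit_isOpen.mem_nhds hq)

lemma sum2_analytic {q₀ : ℂ} (hq : q₀ ∈ slitDisc) :
    AnalyticAt ℂ (fun q => ∑' n, qB (vF q * q) (uF q * q ^ 2) q n *
      (1 / (1 - 2 * q + q ^ (n + 2)))) q₀ := by
  obtain ⟨c, hc, hev⟩ := den_lower hq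
  obtain ⟨s, hs, hso, hqs⟩ := eventually_nhds_iff.mp
    (hev.and (slit_isOpen.mem_nhds hq : ∀ᶠ q in 𝓝 q₀, q ∈ slitDisc))
  have hd : DifferentiableOn ℂ (fun q => ∑' n, qB (vF q * q) (uF q * q ^ 2) q n *
      (1 / (1 - 2 * q + q ^ (n + 2)))) s := by
    refine differentiableOn_tsum_of_summable_norm
      ((qM_summable (X := 93 / 100) (Y := 1) (Q := 55 / 100) (by norm_num) (by norm_num)
        (by norm_num) (by norm_num) (by norm_num)).mul_right (1 / c)) (fun n q hq => ?_) hso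
        (fun n q hq => ?_)
    · have hq' := (hs q hq).2
      have h1 := hq'.1
      have h2 := root_in_slit hq' n
      refine ((qB_diff (by linarith) ((vF_diff h1).mul differentiableAt_fun_id)
        ((uF_diff h1).mul (differentiableAt_fun_id.pow 2)) n).mul ?_).differentiableWithinAt
      fun_prop (disch := assumption)
    · have hq' := (hs q hq).2
      have h1 := hq'.1
      have h3 := (hs q hq).1 n
      rw [norm_mul, norm_div, norm_one]
      have h4 := qB_norm_le (vq_bound h1) (uqq_bound h1) h1.le (by norm_num) n
      have h5 := (norm_nonneg _).trans h4
      gcongr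
  exact hd.analyticAt (hso.mem_nhds hqs)

lemma fF_analytic : AnalyticOnNhd ℂ fF slitDisc := by
  intro q hq
  have h1 := one_sub_ne (q := q) (by have := hq.1; linarith)
  have h2 := half_not_slit hq
  have h3 : (1 - 2 * q) ^ 2 ≠ 0 := pow_ne_zero 2 h2
  have h4 : (1 - q) * (1 - 2 * q) ^ 2 ≠ 0 := mul_ne_zero h1 h3
  have e1 : AnalyticAt ℂ CF q := by
    unfold CF
    fun_prop (disch := assumption)
  have e2 : AnalyticAt ℂ (fun q => q ^ 4 * AF q / (1 - q)) q := by
    unfold AF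
    fun_prop (disch := assumption)
  unfold fF
  exact e1.add ((e2.mul (sum1_analytic hq)).mul (sum2_analytic hq))

lemma PAterm_eq {q : ℂ} (hq : ‖q‖ < 1 / 10) (m : ℕ) :
    PAterm q (m + 1) = (-(q ^ 2) / (1 - 2 * q)) ^ (m + 1) * (1 / (1 - q)) *
      ((∑' n, qB (uF q * q) (vF q * q) q n) *
        ∑' n, qB (vF q * q) (uF q * q ^ 2) q n * (q ^ m) ^ n) := by
  have hq1 : ‖q‖ < 1 := by linarith
  have hq2 : ‖q‖ < 55 / 100 := by linarith
  have h1 := one_sub_ne hq1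
  have hqm : ‖q ^ m‖ ≤ 1 := by rw [norm_pow]; exact pow_le_one₀ (norm_nonneg _) hq1.le
  have hu : ‖uF q * q‖ < 1 := (uq_bound hq2).trans_lt (by norm_num)
  have hv : ‖vF q * q‖ < 1 := (vq_bound hq2).trans_lt (by norm_num)
  have hvm : ‖vF q * q * q ^ m‖ < 1 := by
    rw [norm_mul]; exact mul_lt_one_of_nonneg_of_lt_one_left (norm_nonneg _) hv hqm
  simp only [← qB_scale]
  rw [qbinomial _ hu hq1, qbinomial _ hvm hq1]
  rw [qPI_split (vF q * q) hq1 m, qPI_split (uF q * q) hq1 (m + 1)]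
  have hum : ‖uF q * q * q ^ (m + 1)‖ < 1 := by
    rw [norm_mul]
    exact mul_lt_one_of_nonneg_of_lt_one_left (norm_nonneg _) hu (norm_pow_lt_one_aux hq1 m).le
  have n1 := qPI_ne_zero hvm hq1
  have n2 := qPI_ne_zero hum hq1
  have n3 : qPF (uF q * q) q (m + 1) ≠ 0 := by
    have := qPI_ne_zero hu hq1
    rw [qPI_split (uF q * q) hq1 (m + 1)] at this
    exact left_ne_zero_of_mul this
  have e : uF q * q ^ 2 * q ^ m = uF q * q * q ^ (m + 1) := by ring
  rw [e]
  have e2 : qPF (vF q * q) q m * qPI (vF q * q * q ^ m) q /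
      (qPF (uF q * q) q (m + 1) * qPI (uF q * q * q ^ (m + 1)) q) *
      (qPI (uF q * q * q ^ (m + 1)) q / qPI (vF q * q * q ^ m) q)
      = qPF (vF q * q) q m / qPF (uF q * q) q (m + 1) := by
    generalize qPI (uF q * q * q ^ (m + 1)) q = x1 at n2 ⊢
    generalize qPF (uF q * q) q (m + 1) = x2 at n3 ⊢
    generalize qPI (vF q * q * q ^ m) q = x3 at n1 ⊢
    field_simp
  rw [e2, PAterm, qPF_succ]
  rw [qPF_succ] at n3
  have n4 := left_ne_zero_of_mul n3
  have n5 := right_ne_zero_of_mul n3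
  have e3 : ∏ k ∈ Finset.Icc 1 (m + 1 - 1),
      ((1 - q - q ^ k + q ^ (k + 1) - q ^ (k + 2)) / (1 - q - q ^ (k + 1)))
      = qPF (vF q * q) q m / qPF (uF q * q) q m := by
    rw [Nat.add_sub_cancel, qPF, qPF, ← Finset.prod_div_distrib, ← Finset.Ico_add_one_right_eq_Icc,
      Finset.prod_Ico_eq_prod_range]
    refine Finset.prod_congr rfl fun i _ => ?_
    have a1 : 1 - vF q * q * q ^ i
        = (1 - q - q ^ (1 + i) + q ^ (1 + i + 1) - q ^ (1 + i + 2)) / (1 - q) := by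
      rw [vF]; field_simp; ring
    have a2 : 1 - uF q * q * q ^ i = (1 - q - q ^ (1 + i + 1)) / (1 - q) := by
      rw [uF]; field_simp; ring
    rw [a1, a2, div_div_div_cancel_right₀ h1]
  rw [e3]
  have a3 : (1 - q - q ^ (m + 1 + 1)) = (1 - q) * (1 - uF q * q * q ^ m) := by
    rw [uF]; field_simp; ring
  rw [a3, div_pow, neg_pow (q ^ 2), ← pow_mul]
  generalize qPF (uF q * q) q m = x1 at n4 ⊢
  generalize qPF (vF q * q) q m = x2
  generalize (1 - uF q * q * q ^ m) = x3 at n5 ⊢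
  field_simp

lemma fF_eq_series {q : ℂ} (hq : ‖q‖ < 1 / 10) : fF q = PAseries q := by
  have hq1 : ‖q‖ < 1 := by linarith
  have hq2 : ‖q‖ < 55 / 100 := by linarith
  have h1 := one_sub_ne hq1
  have hslit : q ∈ slitDisc := by
    refine ⟨hq2, ?_⟩
    rintro ⟨x, hx, -, rfl⟩
    simp only [norm_real, Real.norm_eq_abs] at hq
    have := le_abs_self x
    linarith
  have ht := half_not_slit hslit
  have hv : ‖vF q * q‖ < 1 := (vq_bound hq2).trans_lt (by norm_num)
  set z := -(q ^ 2) / (1 - 2 * q) with hz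
  have hz1 : ‖z‖ < 1 := by
    rw [hz, norm_div, norm_neg, norm_pow]
    have : 8 / 10 ≤ ‖1 - 2 * q‖ := by
      have := norm_sub_norm_le (1 : ℂ) (2 * q)
      rw [norm_one, norm_mul, Complex.norm_ofNat] at this
      linarith
    rw [div_lt_one (by linarith)]
    nlinarith [norm_nonneg q]
  set P := ∑' n, qB (uF q * q) (vF q * q) q n with hP
  have hsum : ∑' m : ℕ, PAterm q (m + 1) = z / (1 - q) * P *
      ∑' n, qB (vF q * q) (uF q * q ^ 2) q n * (1 / (1 - z * q ^ n)) := by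
    have hdouble : Summable (fun p : ℕ × ℕ =>
        z ^ p.1 * (qB (vF q * q) (uF q * q ^ 2) q p.2 * (q ^ p.1) ^ p.2)) := by
      have hb := (summable_geometric_of_lt_one (norm_nonneg _) hz1).mul_of_nonneg
        (qB_summable_norm (uF q * q ^ 2) hv hq1) (fun _ => by positivity) (fun _ => norm_nonneg _)
      refine Summable.of_norm_bounded hb fun p => ?_
      rw [norm_mul, norm_mul, norm_pow]
      refine mul_le_mul_of_nonneg_left ?_ (by positivity)
      refine mul_le_of_le_one_right (norm_nonneg _) ?_
      rw [norm_pow, norm_pow]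
      exact pow_le_one₀ (by positivity) (pow_le_one₀ (norm_nonneg _) hq1.le)
    have e1 : ∀ m, PAterm q (m + 1) = z / (1 - q) * P *
        ∑' n, z ^ m * (qB (vF q * q) (uF q * q ^ 2) q n * (q ^ m) ^ n) := fun m => by
      rw [PAterm_eq hq, tsum_mul_left, ← hz, ← hP]; ring
    simp only [e1]
    rw [tsum_mul_left]
    congr 1
    rw [← Summable.tsum_comm' (f := fun (m n : ℕ) =>
      z ^ m * (qB (vF q * q) (uF q * q ^ 2) q n * (q ^ m) ^ n)) hdouble (fun m => hdouble.prod_factor m)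
      (fun n => (hdouble.comp_injective (i := fun m : ℕ => (m, n))
        (fun a b h => by simpa using h)))]
    refine tsum_congr fun n => ?_
    have : ∀ m : ℕ, z ^ m * (qB (vF q * q) (uF q * q ^ 2) q n * (q ^ m) ^ n)
        = qB (vF q * q) (uF q * q ^ 2) q n * (z * q ^ n) ^ m := fun m => by ring
    simp only [this]
    rw [tsum_mul_left, tsum_geometric_of_norm_lt_one, one_div]
    rw [norm_mul, norm_pow]
    exact mul_lt_one_of_nonneg_of_lt_one_left (norm_nonneg _) hz1
      (pow_le_one₀ (norm_nonneg _) hq1.le)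
  have e4 : ∀ n : ℕ, (1 / (1 - z * q ^ n)) = (1 - 2 * q) * (1 / (1 - 2 * q + q ^ (n + 2))) := by
    intro n
    have h2 := root_in_slit hslit n
    have : 1 - z * q ^ n = (1 - 2 * q + q ^ (n + 2)) / (1 - 2 * q) := by
      have h3 := div_mul_cancel₀ (-(q ^ 2)) ht
      rw [eq_div_iff ht, hz]
      linear_combination -q ^ n * h3
    rw [this]; field_simp
  rw [PAseries, hsum]
  simp only [e4, mul_left_comm _ (1 - 2 * q)]
  rw [tsum_mul_left, fF, ← hP, CF, AF, hz]
  generalize (∑' n, qB (vF q * q) (uF q * q ^ 2) q n * (1 / (1 - 2 * q + q ^ (n + 2)))) = S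
  field_simp
  ring

end


section

lemma expabs_le {a : ℝ} (ha : 0 < a) (x : ℝ) :
    Real.exp (-(a * |x|)) ≤ (min 1 (a ^ 2 / 2))⁻¹ * (1 + x ^ 2)⁻¹ := by
  have h1 := Real.quadratic_le_exp_of_nonneg (show 0 ≤ a * |x| by positivity)
  have hc : 0 < min 1 (a ^ 2 / 2) := lt_min one_pos (by positivity)
  have h2 : min 1 (a ^ 2 / 2) * (1 + x ^ 2) ≤ Real.exp (a * |x|) := by
    have e1 := min_le_left 1 (a ^ 2 / 2)
    have e2 := min_le_right 1 (a ^ 2 / 2)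
    have e3 : (a * |x|) ^ 2 = a ^ 2 * x ^ 2 := by rw [mul_pow, sq_abs]
    have e4 : 0 ≤ a * |x| := by positivity
    nlinarith [sq_nonneg x]
  rw [Real.exp_neg, ← mul_inv]
  exact inv_anti₀ (by positivity) h2

lemma integrable_expabs {a : ℝ} (ha : 0 < a) :
    MeasureTheory.Integrable (fun x : ℝ => Real.exp (-(a * |x|))) := by
  refine (integrable_inv_one_add_sq.const_mul (min 1 (a ^ 2 / 2))⁻¹).mono'
    (by fun_prop) (Eventually.of_forall fun x => ?_)
  rw [Real.norm_of_nonneg (Real.exp_pos _).le]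
  exact expabs_le ha x

lemma abs_mul_exp_le {a : ℝ} (ha : 0 < a) (x : ℝ) :
    |x| * Real.exp (-(a * |x|)) ≤ (2 / a) * Real.exp (-(a / 2 * |x|)) := by
  have h1 := Real.add_one_le_exp (a / 2 * |x|)
  have h2 : |x| ≤ (2 / a) * Real.exp (a / 2 * |x|) := by
    calc |x| = (2 / a) * (a / 2 * |x|) := by field_simp
      _ ≤ _ := by
        gcongr
        linarith
  calc |x| * Real.exp (-(a * |x|)) ≤ ((2 / a) * Real.exp (a / 2 * |x|)) * Real.exp (-(a * |x|)) := by
        gcongr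
    _ = _ := by rw [mul_assoc, ← Real.exp_add]; congr 2; ring

/-- generic lower bound for `1 + e^z` -/
lemma one_add_exp_lower {S : Set ℂ} (hS : IsClosed S) {Y : ℝ}
    (hY : ∀ z ∈ S, |z.re| ≤ 1 → |z.im| ≤ Y) (hne : ∀ z ∈ S, 1 + exp z ≠ 0) :
    ∃ c > 0, ∀ z ∈ S, c * (1 + ‖exp z‖) ≤ ‖1 + exp z‖ := by
  have hK : IsCompact (S ∩ (Set.Icc (-1 : ℝ) 1 ×ℂ Set.Icc (-Y) Y)) :=
    (isCompact_Icc.reProdIm isCompact_Icc).inter_left hS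
  have hmem : ∀ z ∈ S, |z.re| ≤ 1 → z ∈ (S ∩ (Set.Icc (-1 : ℝ) 1 ×ℂ Set.Icc (-Y) Y)) :=
    fun z hz h => ⟨hz, Complex.mem_reProdIm.mpr ⟨abs_le.mp h, abs_le.mp (hY z hz h)⟩⟩
  have hfar : ∀ z : ℂ, 1 < |z.re| → 1 / 3 * (1 + ‖exp z‖) ≤ ‖1 + exp z‖ := by
    intro z hz
    have t1 := norm_sub_norm_le (1 : ℂ) (-exp z)
    have t2 := norm_sub_norm_le (exp z) (-1 : ℂ)
    rw [sub_neg_eq_add, norm_neg, norm_one] at t1 t2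
    rw [add_comm (exp z)] at t2
    have hn : ‖exp z‖ = Real.exp z.re := Complex.norm_exp z
    rcases lt_abs.mp hz with h | h
    · have : 2 ≤ ‖exp z‖ := by
        rw [hn]; have := Real.add_one_le_exp z.re; linarith
      linarith
    · have : ‖exp z‖ ≤ 1 / 2 := by
        rw [hn]
        have h3 := Real.add_one_le_exp (-z.re)
        rw [Real.exp_neg] at h3
        have h4 : 2 ≤ (Real.exp z.re)⁻¹ := by linarith
        have h5 := inv_anti₀ two_pos h4
        rw [inv_inv] at h5
        linarith
      linarith
  rcases (S ∩ (Set.Icc (-1 : ℝ) 1 ×ℂ Set.Icc (-Y) Y)).eq_empty_or_nonempty with he | hn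
  · refine ⟨1 / 3, by norm_num, fun z hz => hfar z ?_⟩
    by_contra! h
    have := hmem z hz h
    rw [he] at this
    exact this
  · have hcont : ContinuousOn (fun z : ℂ => ‖1 + exp z‖ / (1 + ‖exp z‖))
        (S ∩ (Set.Icc (-1 : ℝ) 1 ×ℂ Set.Icc (-Y) Y)) := by
      refine Continuous.continuousOn ?_
      refine Continuous.div (by fun_prop) (by fun_prop) fun z => by positivity
    obtain ⟨z₀, hz₀, hmin⟩ := hK.exists_isMinOn hn hcont
    refine ⟨min (1 / 3) (‖1 + exp z₀‖ / (1 + ‖exp z₀‖)), ?_, fun z hz => ?_⟩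
    · have := norm_pos_iff.mpr (hne z₀ hz₀.1)
      exact lt_min (by norm_num) (by positivity)
    · by_cases h : |z.re| ≤ 1
      · have h2 := hmin (hmem z hz h)
        simp only [Set.mem_ofPred_eq] at h2
        rw [← le_div_iff₀ (by positivity)]
        exact (min_le_right _ _).trans h2
      · refine le_trans ?_ (hfar z (not_le.mp h))
        gcongr
        exact min_le_left _ _

lemma cone_lower {κ : ℝ} (hκ : 0 ≤ κ) :
    ∃ c > 0, ∀ z : ℂ, |z.im| ≤ κ * |z.re| → c * (1 + ‖exp z‖) ≤ ‖1 + exp z‖ := by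
  refine one_add_exp_lower (S := {z : ℂ | |z.im| ≤ κ * |z.re|}) (Y := κ)
    (isClosed_le (by fun_prop) (by fun_prop)) (fun z hz h => ?_) (fun z hz h => ?_)
  · have hz' : |z.im| ≤ κ * |z.re| := hz
    exact hz'.trans (mul_le_of_le_one_right hκ h)
  · have hz' : |z.im| ≤ κ * |z.re| := hz
    have h1 : exp z = -1 := by linear_combination h
    have h2 : Real.exp z.re = 1 := by
      rw [← Complex.norm_exp, h1]; simp
    have h3 : z.re = 0 := Real.exp_eq_one_iff _ |>.mp h2
    rw [h3] at hz'
    simp only [abs_zero, mul_zero, abs_nonpos_iff] at hz'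
    have : z = 0 := Complex.ext h3 hz'
    rw [this] at h1
    norm_num at h1

lemma exp_frac_bound {b m : ℝ} (s : ℝ) {δ c E : ℝ} (hδ1 : δ ≤ b) (hδ2 : δ ≤ m - b)
    (hc : 0 < c) (hE : 0 < E) (hEs : 0 ≤ s → Real.exp (m * s) ≤ E) {N : ℝ}
    (hN : c * (1 + E) ≤ N) :
    Real.exp (b * s) / N ≤ c⁻¹ * Real.exp (-(δ * |s|)) := by
  have hNpos : 0 < N := lt_of_lt_of_le (by positivity) hN
  rw [div_le_iff₀ hNpos]
  have h1 : Real.exp (b * s) ≤ Real.exp (-(δ * |s|)) * (1 + E) := by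
    rcases le_or_gt 0 s with h | h
    · rw [abs_of_nonneg h]
      calc Real.exp (b * s) ≤ Real.exp (-(δ * s) + m * s) := by
            apply Real.exp_le_exp.mpr; nlinarith
        _ = Real.exp (-(δ * s)) * Real.exp (m * s) := Real.exp_add _ _
        _ ≤ _ := by
            gcongr
            have := hEs h
            linarith
    · rw [abs_of_neg h]
      calc Real.exp (b * s) ≤ Real.exp (-(δ * -s)) := by
            apply Real.exp_le_exp.mpr; nlinarith
        _ ≤ _ := le_mul_of_one_le_right (Real.exp_pos _).le (by linarith)
  calc Real.exp (b * s) ≤ Real.exp (-(δ * |s|)) * (1 + E) := h1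
    _ = c⁻¹ * Real.exp (-(δ * |s|)) * (c * (1 + E)) := by field_simp
    _ ≤ _ := by gcongr

/-- base Beta integral -/
lemma J_one {α : ℂ} (h0 : 0 < α.re) (h1 : α.re < 1) :
    ∫ s : ℝ, exp (α * s) / (1 + exp s) = Real.pi / sin (Real.pi * α) := by
  have hα : 0 < (1 - α).re := by simpa using h1
  have hb := Gamma_mul_Gamma_eq_betaIntegral h0 hα
  rw [Gamma_mul_Gamma_one_sub] at hb
  simp only [add_sub_cancel, Gamma_one, one_mul] at hb
  rw [hb, betaIntegral, intervalIntegral.integral_of_le zero_le_one,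
    MeasureTheory.integral_Ioc_eq_integral_Ioo, ← Real.range_sigmoid, ← Set.image_univ,
    MeasureTheory.integral_image_eq_integral_abs_deriv_smul MeasurableSet.univ
      (fun x _ => (Real.hasDerivAt_sigmoid x).hasDerivWithinAt) Real.sigmoid_injective.injOn,
    MeasureTheory.setIntegral_univ]
  refine MeasureTheory.integral_congr_ae (Eventually.of_forall fun s => ?_)
  have p1 := Real.sigmoid_pos s
  have p2 : 0 < 1 - Real.sigmoid s := by have := Real.sigmoid_lt_one s; linarith
  simp only [real_smul]
  rw [abs_of_pos (by positivity)]
  have c1 : (1 : ℂ) - (Real.sigmoid s : ℂ) = ((1 - Real.sigmoid s : ℝ) : ℂ) := by push_cast; rfl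
  rw [c1, sub_sub_cancel_left]
  have e1 : ((Real.sigmoid s : ℝ) : ℂ) ^ (α - 1) = exp ((Real.log (Real.sigmoid s) : ℂ) * (α - 1)) := by
    rw [cpow_def_of_ne_zero (by exact_mod_cast p1.ne'), ofReal_log p1.le]
  have e2 : ((1 - Real.sigmoid s : ℝ) : ℂ) ^ (-α) = exp ((Real.log (1 - Real.sigmoid s) : ℂ) * (-α)) := by
    rw [cpow_def_of_ne_zero (by exact_mod_cast p2.ne'), ofReal_log p2.le]
  rw [e1, e2]
  have hl : Real.log (1 - Real.sigmoid s) = Real.log (Real.sigmoid s) - s := by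
    rw [← Real.sigmoid_neg, ← Real.sigmoid_mul_rexp_neg, Real.log_mul p1.ne' (Real.exp_pos _).ne',
      Real.log_exp]; ring
  have e3 : ((Real.sigmoid s * (1 - Real.sigmoid s) : ℝ) : ℂ)
      = exp (Real.log (Real.sigmoid s)) * exp (Real.log (Real.sigmoid s) - s) := by
    rw [← ofReal_sub, ← hl, ← ofReal_exp, ← ofReal_exp, Real.exp_log p1, Real.exp_log p2]
    push_cast; rfl
  have e4 : (1 + exp (s : ℂ))⁻¹ = exp (Real.log (Real.sigmoid s) - s) := by
    rw [← ofReal_sub, ← hl, ← ofReal_exp (Real.log _), Real.exp_log p2, ← Real.sigmoid_neg,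
      Real.sigmoid_def]
    push_cast; simp
  rw [e3, div_eq_mul_inv, e4, hl, ← exp_add, ← exp_add, ← exp_add, ← exp_add]
  congr 1
  push_cast
  ring

lemma J_real {b : ℂ} {L : ℝ} (h0 : 0 < b.re) (h1 : b.re < L) :
    ∫ s : ℝ, exp (b * s) / (1 + exp (L * s)) = Real.pi / L / sin (Real.pi * b / L) := by
  have hL : 0 < L := h0.trans h1
  have hLc : (L : ℂ) ≠ 0 := by exact_mod_cast hL.ne'
  have h := MeasureTheory.Measure.integral_comp_mul_left
    (fun s : ℝ => exp (b / L * s) / (1 + exp s)) L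
  have hre : (b / L).re = b.re / L := by simp [Complex.div_ofReal_re]
  rw [J_one (by rw [hre]; positivity) (by rw [hre, div_lt_one hL]; exact h1)] at h
  rw [abs_of_pos (by positivity), real_smul] at h
  calc ∫ s : ℝ, exp (b * s) / (1 + exp (L * s))
      = ∫ s : ℝ, exp (b / L * (L * s : ℝ)) / (1 + exp ((L * s : ℝ) : ℂ)) := by
        congr 1; ext s; push_cast
        congr 2; field_simp
    _ = _ := by
        rw [h]; push_cast
        rw [mul_div_assoc (Real.pi : ℂ) b]
        ring

lemma sin_ne_aux {b L : ℂ} (h0 : 0 < b.re) (h1 : b.re < L.re) : sin (Real.pi * b / L) ≠ 0 := by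
  have hL : L ≠ 0 := fun h => by rw [h] at h1; simp at h1; linarith
  intro h
  obtain ⟨k, hk⟩ := Complex.sin_eq_zero_iff.mp h
  have hpi : (Real.pi : ℂ) ≠ 0 := by exact_mod_cast Real.pi_ne_zero
  rw [div_eq_iff hL] at hk
  have hb : b = k * L := by
    apply mul_left_cancel₀ hpi; rw [hk]; ring
  have hre : b.re = k * L.re := by rw [hb]; simp
  have hLr := h0.trans h1
  rw [hre] at h0 h1
  have k0 : (0 : ℝ) < k := pos_of_mul_pos_left h0 hLr.le
  have k1 : (k : ℝ) < 1 := by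
    by_contra! hh
    nlinarith
  have : (0 : ℤ) < k := by exact_mod_cast k0
  have : k < (1 : ℤ) := by exact_mod_cast k1
  omega

lemma J_deriv {b L₀ : ℂ} (h0 : 0 < b.re) (h1 : b.re < L₀.re) :
    DifferentiableAt ℂ (fun L : ℂ => ∫ s : ℝ, exp (b * s) / (1 + exp (L * s))) L₀ := by
  set m := (b.re + L₀.re) / 2 with hm
  have hmb : b.re < m := by rw [hm]; linarith
  have hmL : m < L₀.re := by rw [hm]; linarith
  have hm0 : 0 < m := h0.trans hmb
  set δ := min b.re (m - b.re) with hδ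
  have hδ0 : 0 < δ := lt_min h0 (by linarith)
  obtain ⟨c, hc, hcone⟩ := cone_lower (κ := (|L₀.im| + 1) / m) (by positivity)
  set S : Set ℂ := {L | m < L.re ∧ |L.im| < |L₀.im| + 1} with hS
  have hSo : IsOpen S := (isOpen_lt continuous_const Complex.continuous_re).inter
    (isOpen_lt (continuous_abs.comp Complex.continuous_im) continuous_const)
  have hLS : L₀ ∈ S := ⟨hmL, by linarith⟩
  have hlow : ∀ L ∈ S, ∀ s : ℝ, c * (1 + Real.exp (L.re * s)) ≤ ‖1 + exp (L * s)‖ := by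
    intro L hL s
    have hn : ‖exp (L * s)‖ = Real.exp (L.re * s) := by rw [Complex.norm_exp]; simp
    rw [← hn]
    apply hcone
    have e1 : (L * s).im = L.im * s := by simp
    have e2 : (L * s).re = L.re * s := by simp
    rw [e1, e2, abs_mul, abs_mul, ← mul_assoc]
    refine mul_le_mul_of_nonneg_right ?_ (abs_nonneg s)
    rw [abs_of_pos (hm0.trans hL.1), div_mul_eq_mul_div, le_div_iff₀ hm0]
    have := hL.1
    have := hL.2
    have := abs_nonneg L.im
    nlinarith
  have hne : ∀ L ∈ S, ∀ s : ℝ, 1 + exp (L * s) ≠ 0 := fun L hL s => by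
    have := hlow L hL s
    exact norm_pos_iff.mp (lt_of_lt_of_le (by positivity) this)
  have hbd : ∀ L ∈ S, ∀ s : ℝ, Real.exp (b.re * s) / ‖1 + exp (L * s)‖
      ≤ c⁻¹ * Real.exp (-(δ * |s|)) := fun L hL s =>
    exp_frac_bound (m := m) s (min_le_left _ _) (min_le_right _ _) hc (Real.exp_pos (L.re * s))
      (fun hs => Real.exp_le_exp.mpr (by have := hL.1; nlinarith)) (hlow L hL s)
  have hnb : ∀ s : ℝ, ‖exp (b * s)‖ = Real.exp (b.re * s) := fun s => by
    rw [Complex.norm_exp]; simp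
  have hcont : ∀ L ∈ S, Continuous (fun s : ℝ => exp (b * s) / (1 + exp (L * s))) := fun L hL =>
    Continuous.div (by fun_prop) (by fun_prop) (hne L hL)
  refine (hasDerivAt_integral_of_dominated_loc_of_deriv_le (μ := MeasureTheory.volume)
    (F := fun (L : ℂ) (s : ℝ) => exp (b * s) / (1 + exp (L * s)))
    (F' := fun (L : ℂ) (s : ℝ) => -(exp (b * s) * (s * exp (L * s))) / (1 + exp (L * s)) ^ 2)
    (bound := fun s => c⁻¹ * c⁻¹ * ((2 / δ) * Real.exp (-(δ / 2 * |s|))))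
    (x₀ := L₀) (hSo.mem_nhds hLS) ?_ ?_ ?_ ?_ ?_ ?_).2.differentiableAt
  · filter_upwards [hSo.mem_nhds hLS] with L hL
    exact (hcont L hL).aestronglyMeasurable
  · refine ((integrable_expabs hδ0).const_mul c⁻¹).mono' (hcont L₀ hLS).aestronglyMeasurable
      (Eventually.of_forall fun s => ?_)
    rw [norm_div, hnb]
    exact hbd L₀ hLS s
  · exact (Continuous.div (by fun_prop) (by fun_prop)
      (fun s => pow_ne_zero 2 (hne L₀ hLS s))).aestronglyMeasurable
  · refine Eventually.of_forall fun s L hL => ?_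
    have hE : ‖exp (L * s)‖ = Real.exp (L.re * s) := by rw [Complex.norm_exp]; simp
    have hl := hlow L hL s
    have hNpos : 0 < ‖1 + exp (L * s)‖ := lt_of_lt_of_le (by positivity) hl
    have h2 : ‖exp (L * s)‖ / ‖1 + exp (L * s)‖ ≤ c⁻¹ := by
      rw [div_le_iff₀ hNpos, hE]
      calc Real.exp (L.re * s) ≤ 1 + Real.exp (L.re * s) := by linarith
        _ = c⁻¹ * (c * (1 + Real.exp (L.re * s))) := by field_simp
        _ ≤ _ := by gcongr
    have e : ‖-(exp (b * s) * (s * exp (L * s))) / (1 + exp (L * s)) ^ 2‖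
        = (Real.exp (b.re * s) / ‖1 + exp (L * s)‖) * |s| *
          (‖exp (L * s)‖ / ‖1 + exp (L * s)‖) := by
      rw [norm_div, norm_neg, norm_mul, norm_mul, norm_pow, hnb, norm_real, Real.norm_eq_abs]
      field_simp
    rw [e]
    calc _ ≤ (c⁻¹ * Real.exp (-(δ * |s|))) * |s| * c⁻¹ := by
          gcongr
          exact hbd L hL s
      _ = c⁻¹ * c⁻¹ * (|s| * Real.exp (-(δ * |s|))) := by ring
      _ ≤ _ := by
          exact mul_le_mul_of_nonneg_left (abs_mul_exp_le hδ0 s) (by positivity)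
  · exact ((integrable_expabs (half_pos hδ0)).const_mul _).const_mul _
  · refine Eventually.of_forall fun s L hL => ?_
    have d1 : HasDerivAt (fun L : ℂ => 1 + exp (L * s)) (s * exp (L * s)) L := by
      have := (((hasDerivAt_id L).mul_const (s : ℂ)).cexp).const_add 1
      refine this.congr_deriv ?_
      simp; ring
    have := (hasDerivAt_const L (exp (b * s))).div d1 (hne L hL s)
    refine this.congr_deriv ?_
    simp

lemma J_eq {b L : ℂ} (h0 : 0 < b.re) (h1 : b.re < L.re) :
    ∫ s : ℝ, exp (b * s) / (1 + exp (L * s)) = Real.pi / L / sin (Real.pi * b / L) := by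
  set U : Set ℂ := {L | b.re < L.re} with hU
  have hUo : IsOpen U := isOpen_lt continuous_const Complex.continuous_re
  have hUc : Convex ℝ U := convex_halfSpace_re_gt _
  have hf : AnalyticOnNhd ℂ (fun L : ℂ => ∫ s : ℝ, exp (b * s) / (1 + exp (L * s))) U :=
    DifferentiableOn.analyticOnNhd
      (fun L hL => (J_deriv h0 hL).differentiableWithinAt) hUo
  have hg : AnalyticOnNhd ℂ (fun L : ℂ => Real.pi / L / sin (Real.pi * b / L)) U := by
    refine DifferentiableOn.analyticOnNhd (fun L hL => ?_) hUo
    have hL0 : L ≠ 0 := fun h => by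
      have : b.re < L.re := hL
      rw [h] at this; simp at this; linarith
    have hs := sin_ne_aux h0 (show b.re < L.re from hL)
    exact DifferentiableAt.differentiableWithinAt (by fun_prop (disch := assumption))
  set x₀ : ℝ := b.re + 1
  have hx₀ : (x₀ : ℂ) ∈ U := by simp [hU, x₀]
  refine hf.eqOn_of_preconnected_of_frequently_eq hg hUc.isPreconnected hx₀ ?_ h1
  have ht : Tendsto (fun n : ℕ => ((x₀ + 1 / ((n : ℝ) + 1) : ℝ) : ℂ)) atTop (𝓝[≠] (x₀ : ℂ)) := by
    rw [tendsto_nhdsWithin_iff]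
    constructor
    · have : Tendsto (fun n : ℕ => (x₀ + 1 / ((n : ℝ) + 1) : ℝ)) atTop (𝓝 (x₀ + 0)) :=
        tendsto_one_div_add_atTop_nhds_zero_nat.const_add x₀
      rw [add_zero] at this
      exact (Complex.continuous_ofReal.tendsto x₀).comp this
    · refine Eventually.of_forall fun n => ?_
      simp only [Set.mem_compl_iff, Set.mem_singleton_iff, ofReal_inj]
      have : 0 < 1 / ((n : ℝ) + 1) := by positivity
      linarith
  refine ht.frequently (Frequently.of_forall fun n => ?_)
  refine J_real h0 ?_
  have : 0 < 1 / ((n : ℝ) + 1) := by positivity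
  simp only [x₀]; linarith

end


section

def FFn (β L ζ : ℂ) : ℂ := exp (β * ζ) / (1 + exp (L * ζ))

def PPn (β L : ℂ) (k : ℤ) : ℂ :=
  (Real.pi : ℂ) / sin ((Real.pi : ℂ) * (β / L) + 2 * I * (k : ℂ) * (Real.pi : ℂ) ^ 2 / L)

lemma one_div_re_pos {L : ℂ} (hL : 0 < L.re) : 0 < (1 / L).re := by
  have hL0 : L ≠ 0 := fun h => by rw [h] at hL; simp at hL
  rw [one_div, Complex.inv_re]
  exact div_pos hL (Complex.normSq_pos.mpr hL0)

lemma strip_lower {L : ℂ} (hL : 0 < L.re) {h : ℝ} (h0 : 0 ≤ h) (hh : h < Real.pi * (1 / L).re) :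
    ∃ c > 0, ∀ ζ : ℂ, |ζ.im| ≤ h → c * (1 + ‖exp (L * ζ)‖) ≤ ‖1 + exp (L * ζ)‖ := by
  have hL0 : L ≠ 0 := fun h => by rw [h] at hL; simp at hL
  have hex := one_add_exp_lower (S := {z : ℂ | |(z / L).im| ≤ h})
    (Y := L.re * h + |L.im| * ((1 + |L.im| * h) / L.re))
    (isClosed_le (continuous_abs.comp (Complex.continuous_im.comp (continuous_id.div_const L)))
      continuous_const) (fun z hz hzr => ?_) (fun z hz hz1 => ?_)
  · obtain ⟨c, hc, H⟩ := hex
    refine ⟨c, hc, fun ζ hζ => H (L * ζ) ?_⟩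
    show |(L * ζ / L).im| ≤ h
    rwa [mul_div_cancel_left₀ _ hL0]
  · have hz' : |(z / L).im| ≤ h := hz
    obtain ⟨ζ, rfl⟩ : ∃ ζ, z = L * ζ := ⟨z / L, by field_simp⟩
    rw [mul_div_cancel_left₀ _ hL0] at hz'
    have e1 : (L * ζ).re = L.re * ζ.re - L.im * ζ.im := Complex.mul_re _ _
    have e2 : (L * ζ).im = L.re * ζ.im + L.im * ζ.re := Complex.mul_im _ _
    have b1 : |L.im * ζ.im| ≤ |L.im| * h := by rw [abs_mul]; gcongr
    have b2 : |ζ.re| ≤ (1 + |L.im| * h) / L.re := by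
      rw [le_div_iff₀ hL]
      have : |ζ.re| * L.re = |(L * ζ).re + L.im * ζ.im| := by
        rw [e1, sub_add_cancel, abs_mul, abs_of_pos hL, mul_comm]
      rw [this]
      exact (abs_add_le _ _).trans (add_le_add hzr b1)
    rw [e2]
    refine (abs_add_le _ _).trans (add_le_add ?_ ?_)
    · rw [abs_mul, abs_of_pos hL]; gcongr
    · rw [abs_mul]; gcongr
  · have hz' : |(z / L).im| ≤ h := hz
    have h1 : exp z = exp (Real.pi * I) := by
      rw [exp_pi_mul_I]; linear_combination hz1
    obtain ⟨n, hn⟩ := Complex.exp_eq_exp_iff_exists_int.mp h1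
    have e : (z / L).im = (2 * n + 1) * (Real.pi * (1 / L).re) := by
      have : z / L = (((2 * n + 1) * Real.pi : ℝ) : ℂ) * (I * (1 / L)) := by
        rw [hn]; push_cast; ring
      rw [this, Complex.im_ofReal_mul, Complex.I_mul_im]
      ring
    rw [e, abs_mul, abs_of_pos (show 0 < Real.pi * (1 / L).re from
      mul_pos Real.pi_pos (one_div_re_pos hL))] at hz'
    have h2 : (1 : ℝ) ≤ |2 * (n : ℝ) + 1| := by
      have : (1 : ℤ) ≤ |2 * n + 1| := Int.one_le_abs (by omega)
      exact_mod_cast this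
    have := one_div_re_pos hL
    have := Real.pi_pos
    nlinarith [mul_pos Real.pi_pos (one_div_re_pos hL)]

lemma strip_bound {β L : ℂ} (hβ : 0 < β.re) (hβL : β.re < L.re) {h : ℝ} (h0 : 0 ≤ h)
    (hh : h < Real.pi * (1 / L).re) :
    ∃ C > 0, ∃ δ > 0, ∀ ζ : ℂ, |ζ.im| ≤ h →
      1 + exp (L * ζ) ≠ 0 ∧ ‖FFn β L ζ‖ ≤ C * Real.exp (-(δ * |ζ.re|)) := by
  have hL := hβ.trans hβL
  obtain ⟨c, hc, H⟩ := strip_lower hL h0 hh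
  set c' := c * Real.exp (-(|L.im| * h)) with hc'
  have hc'0 : 0 < c' := by positivity
  refine ⟨Real.exp (|β.im| * h) * c'⁻¹, by positivity, min β.re (L.re - β.re),
    lt_min hβ (by linarith), fun ζ hζ => ?_⟩
  have key : ∀ x y : ℝ, |y| ≤ h → -(|x| * h) ≤ -(x * y) ∧ -(x * y) ≤ |x| * h := by
    intro x y hy
    have : |x * y| ≤ |x| * h := by rw [abs_mul]; gcongr
    have := abs_le.mp this
    constructor <;> linarith
  have hN : c' * (1 + Real.exp (L.re * ζ.re)) ≤ ‖1 + exp (L * ζ)‖ := by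
    refine le_trans ?_ (H ζ hζ)
    rw [hc', mul_assoc]
    refine mul_le_mul_of_nonneg_left ?_ hc.le
    rw [mul_add, mul_one, ← Real.exp_add, Complex.norm_exp, Complex.mul_re]
    have k := (key L.im ζ.im hζ).1
    refine add_le_add ?_ (Real.exp_le_exp.mpr (by linarith))
    rw [Real.exp_le_one_iff]
    have : 0 ≤ |L.im| * h := by positivity
    linarith
  have hpos : 0 < ‖1 + exp (L * ζ)‖ := lt_of_lt_of_le (by positivity) hN
  refine ⟨norm_pos_iff.mp hpos, ?_⟩
  have hb := exp_frac_bound (b := β.re) (m := L.re) ζ.re (min_le_left _ (L.re - β.re))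
    (min_le_right _ _) hc'0 (Real.exp_pos (L.re * ζ.re)) (fun _ => le_rfl) hN
  rw [FFn, norm_div, Complex.norm_exp, Complex.mul_re, mul_assoc]
  calc Real.exp (β.re * ζ.re - β.im * ζ.im) / ‖1 + exp (L * ζ)‖
      ≤ Real.exp (|β.im| * h) * Real.exp (β.re * ζ.re) / ‖1 + exp (L * ζ)‖ := by
        gcongr
        rw [← Real.exp_add]
        apply Real.exp_le_exp.mpr
        have := (key β.im ζ.im hζ).2
        linarith
    _ = Real.exp (|β.im| * h) * (Real.exp (β.re * ζ.re) / ‖1 + exp (L * ζ)‖) := by ring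
    _ ≤ _ := by gcongr

lemma summable_int_expabs {a : ℝ} (ha : 0 < a) :
    Summable (fun k : ℤ => Real.exp (-(a * |(k : ℝ)|))) := by
  have h1 : Summable (fun n : ℕ => Real.exp (n * (-a))) :=
    Real.summable_exp_nat_mul_iff.mpr (by linarith)
  refine Summable.of_nat_of_neg (h1.congr fun n => ?_) (h1.congr fun n => ?_)
  · simp; ring
  · simp; ring

lemma norm_sin_lower {z : ℂ} (hz : 1 ≤ |z.im|) : Real.exp |z.im| / 4 ≤ ‖sin z‖ := by
  have hs : sin z = (exp (-z * I) - exp (z * I)) * I / 2 := rfl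
  have e1 : ‖exp (-z * I)‖ = Real.exp z.im := by rw [Complex.norm_exp]; simp
  have e2 : ‖exp (z * I)‖ = Real.exp (-z.im) := by rw [Complex.norm_exp]; simp
  have hn : ‖sin z‖ = ‖exp (-z * I) - exp (z * I)‖ / 2 := by
    rw [hs]; simp
  have h3 : Real.exp (-|z.im|) ≤ 1 := Real.exp_le_one_iff.mpr (by simp)
  have h4 : 2 ≤ Real.exp |z.im| := by have := Real.add_one_le_exp |z.im|; linarith
  rw [hn]
  have t1 := norm_sub_norm_le (exp (-z * I)) (exp (z * I))
  have t2 := norm_sub_norm_le (exp (z * I)) (exp (-z * I))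
  rw [norm_sub_rev (exp (z * I))] at t2
  rw [e1, e2] at t1 t2
  rcases abs_cases z.im with ⟨h, _⟩ | ⟨h, _⟩ <;> rw [h] at h3 h4 ⊢
  · linarith
  · rw [neg_neg] at h3; linarith

lemma PPn_summable {β L : ℂ} (hL : 0 < L.re) {h : ℝ}
    (hh : h < Real.pi * (1 / L).re) :
    Summable (fun k : ℤ => ‖PPn β L k‖ * Real.exp (2 * Real.pi * h * |(k : ℝ)|)) := by
  set H := Real.pi * (1 / L).re with hH
  have hHpos : 0 < H := mul_pos Real.pi_pos (one_div_re_pos hL)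
  set B := Real.pi * |(β / L).im| with hB
  have hpi := Real.pi_pos
  have ha : 0 < 2 * Real.pi * (H - h) := by nlinarith [sub_pos.mpr hh]
  have hlow : ∀ k : ℤ, 2 * Real.pi * H * |(k : ℝ)| - B ≤
      |((Real.pi : ℂ) * (β / L) + 2 * I * (k : ℂ) * (Real.pi : ℂ) ^ 2 / L).im| := by
    intro k
    have e : ((Real.pi : ℂ) * (β / L) + 2 * I * (k : ℂ) * (Real.pi : ℂ) ^ 2 / L).im
        = 2 * Real.pi * H * k - (-(Real.pi * (β / L).im)) := by
      have : (2 * I * (k : ℂ) * (Real.pi : ℂ) ^ 2 / L) =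
        ((2 * k * Real.pi ^ 2 : ℝ) : ℂ) * (I * (1 / L)) := by push_cast; ring
      rw [this, Complex.add_im, Complex.im_ofReal_mul, Complex.im_ofReal_mul, Complex.I_mul_im, hH]
      ring
    rw [e]
    refine le_trans ?_ (abs_sub_abs_le_abs_sub _ _)
    rw [abs_mul _ (k : ℝ), abs_neg, abs_mul Real.pi, abs_of_pos hpi,
      abs_of_pos (show 0 < 2 * Real.pi * H by positivity)]
  refine Summable.of_norm_bounded_eventually
    ((summable_int_expabs ha).mul_left (Real.pi * 4 * Real.exp B)) ?_
  have hev : ∀ᶠ k : ℤ in cofinite, (1 + B) / (2 * Real.pi * H) ≤ |(k : ℝ)| := by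
    have : Tendsto (fun k : ℤ => |(k : ℝ)|) cofinite atTop := by
      have := tendsto_norm_cocompact_atTop (E := ℝ)
      exact this.comp Int.tendsto_coe_cofinite
    exact this.eventually_ge_atTop _
  filter_upwards [hev] with k hk
  rw [div_le_iff₀ (by positivity)] at hk
  have h1 := hlow k
  have h2 := norm_sin_lower (z := (Real.pi : ℂ) * (β / L) + 2 * I * (k : ℂ) * (Real.pi : ℂ) ^ 2 / L)
    (by nlinarith)
  rw [Real.norm_of_nonneg (by positivity), PPn, norm_div, norm_real, Real.norm_of_nonneg hpi.le]
  have h3 : Real.exp (2 * Real.pi * H * |(k : ℝ)| - B) / 4 ≤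
    ‖sin ((Real.pi : ℂ) * (β / L) + 2 * I * (k : ℂ) * (Real.pi : ℂ) ^ 2 / L)‖ :=
    le_trans (by gcongr) h2
  calc _ ≤ Real.pi / (Real.exp (2 * Real.pi * H * |(k : ℝ)| - B) / 4)
        * Real.exp (2 * Real.pi * h * |(k : ℝ)|) := by
        gcongr
    _ = Real.pi * 4 * (Real.exp (-(2 * Real.pi * H * |(k : ℝ)| - B)) *
        Real.exp (2 * Real.pi * h * |(k : ℝ)|)) := by
        rw [Real.exp_neg]; field_simp
    _ = Real.pi * 4 * (Real.exp B * Real.exp (-(2 * Real.pi * (H - h) * |(k : ℝ)|))) := by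
        rw [← Real.exp_add, ← Real.exp_add]; congr 2; ring
    _ = _ := by ring

lemma PP_term_norm (β L w : ℂ) {h : ℝ} (hw : |w.im| ≤ h) (k : ℤ) :
    ‖PPn β L k * exp (-2 * (Real.pi : ℂ) * I * (k : ℂ) * w)‖
      ≤ ‖PPn β L k‖ * Real.exp (2 * Real.pi * h * |(k : ℝ)|) := by
  rw [norm_mul, Complex.norm_exp]
  gcongr
  have : -2 * (Real.pi : ℂ) * I * (k : ℂ) * w = ((-2 * Real.pi * k : ℝ) : ℂ) * (I * w) := by
    push_cast; ring
  rw [this, Complex.re_ofReal_mul, Complex.I_mul_re]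
  have h1 : (k : ℝ) * w.im ≤ |(k : ℝ)| * h := by
    refine (le_abs_self _).trans ?_
    rw [abs_mul]; gcongr
  nlinarith [Real.pi_pos]

lemma fourier_real {β L : ℂ} (hβ : 0 < β.re) (hβL : β.re < L.re) (x : ℝ) :
    ∑' n : ℤ, FFn β L (x + n) =
      ∑' k : ℤ, 1 / L * (PPn β L k * exp (-2 * (Real.pi : ℂ) * I * (k : ℂ) * x)) := by
  have hL := hβ.trans hβL
  have hL0 : L ≠ 0 := fun h => by rw [h] at hL; simp at hL
  have hHpos : 0 < Real.pi * (1 / L).re := mul_pos Real.pi_pos (one_div_re_pos hL)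
  obtain ⟨C, hC, δ, hδ, hb⟩ := strip_bound hβ hβL le_rfl hHpos
  have hb' : ∀ y : ℝ, 1 + exp (L * y) ≠ 0 ∧ ‖FFn β L y‖ ≤ C * Real.exp (-(δ * |y|)) := fun y => by
    simpa using hb y (by simp)
  have hcont : Continuous (fun y : ℝ => FFn β L y) :=
    Continuous.div (by fun_prop) (by fun_prop) fun y => (hb' y).1
  have hF : ∀ n : ℤ, FourierTransform.fourier (fun y : ℝ => FFn β L y) (n : ℝ) =
      1 / L * PPn β L (-n) := by
    intro n
    rw [Real.fourier_real_eq_integral_exp_smul]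
    have := J_eq (b := β - 2 * Real.pi * I * n) (L := L) (by simpa using hβ) (by simpa using hβL)
    rw [PPn]
    have e : (Real.pi : ℂ) * (β / L) + 2 * I * ((-n : ℤ) : ℂ) * (Real.pi : ℂ) ^ 2 / L
        = Real.pi * (β - 2 * Real.pi * I * n) / L := by push_cast; ring
    rw [e]
    calc _ = ∫ s : ℝ, exp ((β - 2 * Real.pi * I * n) * s) / (1 + exp (L * s)) := by
          congr 1; ext s
          rw [FFn, smul_eq_mul, ← mul_div_assoc, ← exp_add]
          congr 2; push_cast; ring
      _ = _ := by rw [this]; ring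
  have hsum : Summable (fun k : ℤ => PPn β L k) := by
    have := PPn_summable (β := β) hL hHpos
    simp at this
    exact this.of_norm
  have hO : (fun y : ℝ => FFn β L y) =O[cocompact ℝ] fun y : ℝ => |y| ^ (-(2 : ℝ)) := by
    refine IsBigO.of_bound (C * (min 1 (δ ^ 2 / 2))⁻¹) ?_
    have : ∀ᶠ y : ℝ in cocompact ℝ, 1 ≤ |y| :=
      (tendsto_norm_cocompact_atTop (E := ℝ)).eventually_ge_atTop 1
    filter_upwards [this] with y hy
    refine (hb' y).2.trans ?_
    have h1 := expabs_le hδ y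
    rw [mul_assoc]
    refine mul_le_mul_of_nonneg_left (h1.trans ?_) hC.le
    have hc : 0 < min 1 (δ ^ 2 / 2) := lt_min one_pos (by positivity)
    refine mul_le_mul_of_nonneg_left ?_ (by positivity)
    rw [Real.norm_of_nonneg (by positivity), Real.rpow_neg (abs_nonneg _)]
    have : |y| ^ (2 : ℝ) = y ^ 2 := by
      rw [show (2 : ℝ) = ((2 : ℕ) : ℝ) by norm_num, Real.rpow_natCast, sq_abs]
    rw [this]
    have : 0 < y ^ 2 := by rw [← sq_abs]; positivity
    exact inv_anti₀ this (by linarith)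
  have key := Real.tsum_eq_tsum_fourier_of_rpow_decay_of_summable (f := fun y : ℝ => FFn β L y)
    hcont (b := 2) (by norm_num) hO ?_ x
  · push_cast at key
    rw [key, ← (Equiv.neg ℤ).tsum_eq]
    refine tsum_congr fun k => ?_
    rw [Equiv.neg_apply, hF, neg_neg, fourier_coe_apply]
    rw [mul_assoc]
    congr 3
    push_cast; ring
  · simp only [hF]
    exact ((Equiv.neg ℤ).summable_iff.mpr hsum).mul_left _

theorem fourier_main {β L : ℂ} (hβ : 0 < β.re) (hβL : β.re < L.re) {w : ℂ}
    (hw : |w.im| < Real.pi * (1 / L).re) :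
    Summable (fun n : ℤ => ‖FFn β L (w + n)‖) ∧ (∀ n : ℤ, 1 + exp (L * (w + n)) ≠ 0) ∧
    Summable (fun k : ℤ => ‖PPn β L k * exp (-2 * (Real.pi : ℂ) * I * (k : ℂ) * w)‖) ∧
    ∑' n : ℤ, FFn β L (w + n) =
      1 / L * ∑' k : ℤ, PPn β L k * exp (-2 * (Real.pi : ℂ) * I * (k : ℂ) * w) := by
  have hL := hβ.trans hβL
  obtain ⟨h, hwh, hh⟩ := exists_between hw
  have h0 : 0 ≤ h := (abs_nonneg _).trans hwh.le
  obtain ⟨C, hC, δ, hδ, hb⟩ := strip_bound hβ hβL h0 hh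
  set R := |w.re| + 1 with hR
  set S : Set ℂ := {z | |z.re| < R ∧ |z.im| < h} with hS
  have hwS : w ∈ S := ⟨by rw [hR]; linarith, hwh⟩
  have hSo : IsOpen S := (isOpen_lt (continuous_abs.comp Complex.continuous_re) continuous_const).inter
    (isOpen_lt (continuous_abs.comp Complex.continuous_im) continuous_const)
  have hSc : Convex ℝ S := by
    have : S = Complex.reLm ⁻¹' (Set.Ioo (-R) R) ∩ Complex.imLm ⁻¹' (Set.Ioo (-h) h) := by
      ext z; simp [hS, abs_lt]
    rw [this]
    exact ((convex_Ioo _ _).linear_preimage _).inter ((convex_Ioo _ _).linear_preimage _)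
  have hsI := (summable_int_expabs hδ).mul_left (C * Real.exp (δ * R))
  have hbn : ∀ z ∈ S, ∀ n : ℤ, 1 + exp (L * (z + n)) ≠ 0 ∧
      ‖FFn β L (z + n)‖ ≤ C * Real.exp (δ * R) * Real.exp (-(δ * |(n : ℝ)|)) := by
    intro z hz n
    have := hb (z + n) (by simpa using hz.2.le)
    refine ⟨this.1, this.2.trans ?_⟩
    rw [mul_assoc, ← Real.exp_add]
    gcongr
    have h1 : (z + n).re = z.re + n := by simp
    rw [h1]
    have h2 : |(n : ℝ)| ≤ |z.re + n| + |z.re| := by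
      have := abs_sub (z.re + n) z.re
      rwa [add_sub_cancel_left] at this
    have := hz.1
    nlinarith
  have hsP := PPn_summable (β := β) hL hh
  have hbP : ∀ z ∈ S, ∀ k : ℤ, ‖PPn β L k * exp (-2 * (Real.pi : ℂ) * I * (k : ℂ) * z)‖
      ≤ ‖PPn β L k‖ * Real.exp (2 * Real.pi * h * |(k : ℝ)|) :=
    fun z hz k => PP_term_norm β L z hz.2.le k
  refine ⟨Summable.of_nonneg_of_le (fun _ => norm_nonneg _) (fun n => (hbn w hwS n).2) hsI,
    fun n => (hbn w hwS n).1,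
    Summable.of_nonneg_of_le (fun _ => norm_nonneg _) (fun k => hbP w hwS k) hsP, ?_⟩
  have d1 : DifferentiableOn ℂ (fun z => ∑' n : ℤ, FFn β L (z + n)) S := by
    refine Complex.differentiableOn_tsum_of_summable_norm hsI (fun n z hz => ?_) hSo
      (fun n z hz => (hbn z hz n).2)
    have := (hbn z hz n).1
    unfold FFn
    exact DifferentiableAt.differentiableWithinAt (by fun_prop (disch := assumption))
  have d2 : DifferentiableOn ℂ
      (fun z => 1 / L * ∑' k : ℤ, PPn β L k * exp (-2 * (Real.pi : ℂ) * I * (k : ℂ) * z)) S := by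
    refine DifferentiableOn.const_mul ?_ _
    refine Complex.differentiableOn_tsum_of_summable_norm hsP (fun n z hz => ?_) hSo
      (fun n z hz => hbP z hz n)
    exact DifferentiableAt.differentiableWithinAt (by fun_prop)
  have h0S : (0 : ℂ) ∈ S := ⟨by simp [hR]; positivity, by simpa using (abs_nonneg _).trans_lt hwh⟩
  refine (d1.analyticOnNhd hSo).eqOn_of_preconnected_of_frequently_eq (d2.analyticOnNhd hSo)
    hSc.isPreconnected h0S ?_ hwS
  have ht : Tendsto (fun n : ℕ => ((1 / ((n : ℝ) + 1) : ℝ) : ℂ)) atTop (𝓝[≠] (0 : ℂ)) := by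
    rw [tendsto_nhdsWithin_iff]
    constructor
    · have : Tendsto (fun n : ℕ => (1 / ((n : ℝ) + 1) : ℝ)) atTop (𝓝 0) :=
        tendsto_one_div_add_atTop_nhds_zero_nat
      have h2 := (Complex.continuous_ofReal.tendsto (0 : ℝ)).comp this
      rw [ofReal_zero] at h2
      exact h2
    · refine Eventually.of_forall fun n => ?_
      have : 0 < 1 / ((n : ℝ) + 1) := by positivity
      simp only [Set.mem_compl_iff, Set.mem_singleton_iff]
      exact_mod_cast this.ne'
  refine ht.frequently (Frequently.of_forall fun n => ?_)
  show _ = 1 / L * _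
  rw [← tsum_mul_left]
  exact fourier_real hβ hβL _

end


section

/-- generating function of `qB a q q m` -/
def GG (a q x : ℂ) : ℂ := ∑' m, qB a q q m * x ^ m

lemma norm_mul_lt_one {a x : ℂ} (ha : ‖a‖ < 1) (hx : ‖x‖ ≤ 1) : ‖a * x‖ < 1 := by
  rw [norm_mul]; exact mul_lt_one_of_nonneg_of_lt_one_left (norm_nonneg _) ha hx

lemma GG_summable {a q x : ℂ} (ha : ‖a‖ < 1) (hq : ‖q‖ < 1) (hx : ‖x‖ ≤ 1) :
    Summable (fun m => qB a q q m * x ^ m) :=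
  (qB_summable (q * x) (norm_mul_lt_one ha hx) hq).congr fun m => qB_scale a q q x m

lemma GG_eq {a q x : ℂ} (ha : ‖a‖ < 1) (hq : ‖q‖ < 1) (hx : ‖x‖ ≤ 1) :
    GG a q x = qPI (q * x) q / qPI (a * x) q := by
  rw [← qbinomial (q * x) (norm_mul_lt_one ha hx) hq]
  exact tsum_congr fun m => (qB_scale a q q x m).symm

lemma GG_step {a q x : ℂ} (ha : ‖a‖ < 1) (hq : ‖q‖ < 1) (hx : ‖x‖ ≤ 1) :
    (1 - a * x) * GG a q x = (1 - q * x) * GG a q (x * q) := by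
  have hxq : ‖x * q‖ ≤ 1 := by
    rw [norm_mul]; exact mul_le_one₀ hx (norm_nonneg _) hq.le
  rw [GG_eq ha hq hx, GG_eq ha hq hxq, ← mul_assoc q, ← mul_assoc a]
  have h1 := qPI_step (q * x) hq
  have h2 := qPI_step (a * x) hq
  have h3 := qPI_ne_zero (norm_mul_lt_one ha hx) hq
  have h4 := qPI_ne_zero (norm_mul_lt_one ha hxq) hq
  rw [← mul_assoc a] at h4
  rw [h1, h2] at *
  have h5 : 1 - a * x ≠ 0 := left_ne_zero_of_mul h3
  field_simp

def gnF (a q : ℂ) (n : ℤ) : ℂ := if 0 ≤ n then GG a q (q ^ n) else 0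

lemma zpow_norm_le_one {q : ℂ} (hq : ‖q‖ < 1) {n : ℤ} (hn : 0 ≤ n) : ‖q ^ n‖ ≤ 1 := by
  lift n to ℕ using hn
  rw [zpow_natCast, norm_pow]
  exact pow_le_one₀ (norm_nonneg _) hq.le

lemma gnF_step {a q : ℂ} (hq0 : q ≠ 0) (ha : ‖a‖ < 1) (hq : ‖q‖ < 1) (n : ℤ) :
    (1 - a * q ^ n) * gnF a q n = (1 - q * q ^ n) * gnF a q (n + 1) := by
  unfold gnF
  rcases lt_trichotomy n (-1) with h | h | h
  · rw [if_neg (by omega), if_neg (by omega)]; simp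
  · subst h
    simp [hq0]
  · rw [if_pos (by omega), if_pos (by omega), zpow_add_one₀ hq0]
    exact GG_step ha hq (zpow_norm_le_one hq (by omega))

/-- iterated remainders -/
def eR (a q : ℂ) : ℕ → ℤ → ℂ
  | 0, n => gnF a q n
  | s + 1, n => (eR a q s n - qB a q q s) / q ^ n

lemma eR_succ {a q : ℂ} (hq0 : q ≠ 0) (s : ℕ) (n : ℤ) :
    q ^ n * eR a q (s + 1) n = eR a q s n - qB a q q s := by
  have : q ^ n ≠ 0 := zpow_ne_zero n hq0
  rw [eR]; field_simp

lemma eR_rec {a q : ℂ} (hq0 : q ≠ 0) (ha : ‖a‖ < 1) (hq : ‖q‖ < 1) (s : ℕ) (n : ℤ) :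
    q ^ (s + 1) * eR a q (s + 1) (n + 1) - eR a q (s + 1) n =
      q ^ (s + 1) * eR a q s (n + 1) - a * eR a q s n := by
  have hx : q ^ n ≠ 0 := zpow_ne_zero n hq0
  have hz := zpow_add_one₀ hq0 n
  induction s with
  | zero =>
    have h1 := eR_succ (a := a) hq0 0 n
    have h2 := eR_succ (a := a) hq0 0 (n + 1)
    have h3 := gnF_step hq0 ha hq n
    rw [hz] at h2
    change _ = gnF a q n - _ at h1
    change _ = gnF a q (n + 1) - _ at h2
    change _ = q ^ (0 + 1) * gnF a q (n + 1) - a * gnF a q n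
    apply mul_left_cancel₀ hx
    linear_combination h2 - h1 - h3
  | succ s ih =>
    have h1 := eR_succ (a := a) hq0 (s + 1) n
    have h2 := eR_succ (a := a) hq0 (s + 1) (n + 1)
    have h3 := eR_succ (a := a) hq0 s n
    have h4 := eR_succ (a := a) hq0 s (n + 1)
    have h5 := qB_succ a q hq s
    rw [hz] at h2 h4
    apply mul_left_cancel₀ hx
    linear_combination q ^ (s + 1) * h2 - h1 + ih + h5 - q ^ (s + 1) * h4 + a * h3

lemma eR_nonneg {a q : ℂ} (hq0 : q ≠ 0) (ha : ‖a‖ < 1) (hq : ‖q‖ < 1) (s : ℕ) {n : ℤ} (hn : 0 ≤ n) :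
    eR a q s n = ∑' m, qB a q q (m + s) * (q ^ n) ^ m := by
  have hx : q ^ n ≠ 0 := zpow_ne_zero n hq0
  induction s with
  | zero => simp [eR, gnF, hn, GG]
  | succ s ih =>
    have hsum : Summable (fun m => qB a q q (m + s) * (q ^ n) ^ m) := by
      refine Summable.of_norm_bounded
        ((summable_nat_add_iff s).mpr (qB_summable_norm q ha hq)) fun m => ?_
      rw [norm_mul, norm_pow]
      exact mul_le_of_le_one_right (norm_nonneg _)
        (pow_le_one₀ (norm_nonneg _) (zpow_norm_le_one hq hn))
    rw [eR, ih, hsum.tsum_eq_zero_add]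
    simp only [zero_add, pow_zero, mul_one, add_sub_cancel_left]
    rw [div_eq_iff hx, ← tsum_mul_right]
    refine tsum_congr fun m => ?_
    rw [show m + 1 + s = m + (s + 1) by ring, pow_succ]; ring

lemma eR_neg_bound {a q : ℂ} (hq0 : q ≠ 0) (hq : ‖q‖ < 1) (s : ℕ) {n : ℤ} (hn : n < 0) :
    ‖eR a q s n‖ ≤ (∑ m ∈ Finset.range s, ‖qB a q q m‖) / ‖q ^ n‖ := by
  have hx : 0 < ‖q ^ n‖ := norm_pos_iff.mpr (zpow_ne_zero n hq0)
  have hx1 : 1 ≤ ‖q ^ n‖ := by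
    rw [norm_zpow]
    have : ‖q‖ ^ n = (‖q‖ ^ (-n).toNat)⁻¹ := by
      rw [← zpow_natCast, ← zpow_neg, Int.toNat_of_nonneg (by omega), neg_neg]
    rw [this]
    exact (one_le_inv₀ (by positivity)).mpr (pow_le_one₀ (norm_nonneg _) hq.le)
  induction s with
  | zero => simp [eR, gnF, not_le.mpr hn]
  | succ s ih =>
    rw [eR, norm_div, Finset.sum_range_succ]
    gcongr
    refine (norm_sub_le _ _).trans (add_le_add (ih.trans ?_) le_rfl)
    exact div_le_self (Finset.sum_nonneg fun _ _ => norm_nonneg _) hx1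

def bW (v q : ℂ) (n : ℤ) : ℝ := if 0 ≤ n then ‖v * q‖ ^ n else ‖v‖ ^ n

lemma bW_nonneg (v q : ℂ) (n : ℤ) : 0 ≤ bW v q n := by
  unfold bW; split_ifs <;> positivity

lemma bW_summable {v q : ℂ} (hv : 1 < ‖v‖) (hvq : ‖v * q‖ < 1) : Summable (bW v q) := by
  refine Summable.of_nat_of_neg_add_one ?_ ?_
  · refine (summable_geometric_of_lt_one (norm_nonneg _) hvq).congr fun n => ?_
    simp [bW]
  · have h := (summable_geometric_of_lt_one (r := ‖v‖⁻¹) (by positivity)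
      (inv_lt_one_of_one_lt₀ hv))
    refine ((summable_nat_add_iff 1).mpr h).congr fun n => ?_
    rw [bW, if_neg (by omega), zpow_neg, inv_pow]
    norm_cast

def gMs (a q : ℂ) : ℝ := ∑' m, ‖qB a q q m‖

lemma eR_bound {a q v : ℂ} (hq0 : q ≠ 0) (hv0 : v ≠ 0) (ha : ‖a‖ < 1) (hq : ‖q‖ < 1)
    (s : ℕ) (n : ℤ) : ‖(v * q) ^ n * eR a q s n‖ ≤ gMs a q * bW v q n := by
  have hs := qB_summable_norm q ha hq
  have hx : 0 < ‖q ^ n‖ := norm_pos_iff.mpr (zpow_ne_zero n hq0)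
  rw [norm_mul, bW]
  split_ifs with h
  · rw [eR_nonneg hq0 ha hq s h, mul_comm, ← norm_zpow]
    gcongr
    have hs' := (summable_nat_add_iff s).mpr hs
    refine (tsum_of_norm_bounded (g := fun m => ‖qB a q q (m + s)‖) hs'.hasSum fun m => ?_).trans ?_
    · rw [norm_mul, norm_pow]
      exact mul_le_of_le_one_right (norm_nonneg _)
        (pow_le_one₀ (norm_nonneg _) (zpow_norm_le_one hq h))
    · rw [gMs, ← hs.sum_add_tsum_nat_add s]
      exact le_add_of_nonneg_left (Finset.sum_nonneg fun _ _ => norm_nonneg _)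
  · have h1 := eR_neg_bound (a := a) hq0 hq s (not_le.mp h)
    calc ‖(v * q) ^ n‖ * ‖eR a q s n‖
        ≤ ‖(v * q) ^ n‖ * ((∑ m ∈ Finset.range s, ‖qB a q q m‖) / ‖q ^ n‖) := by gcongr
      _ = (∑ m ∈ Finset.range s, ‖qB a q q m‖) * ‖v‖ ^ n := by
          rw [mul_zpow, norm_mul, norm_zpow v]; field_simp
      _ ≤ _ := by
          gcongr
          exact hs.sum_le_tsum _ (fun _ _ => norm_nonneg _)

def RR (a q v : ℂ) (s : ℕ) : ℂ := ∑' n : ℤ, (v * q) ^ n * eR a q s n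

lemma v_ne {v : ℂ} (hv : 1 < ‖v‖) : v ≠ 0 := fun h => by rw [h] at hv; simp at hv; linarith

lemma RR_summable {a q v : ℂ} (hq0 : q ≠ 0) (hq : ‖q‖ < 1) (ha : ‖a‖ < 1) (hv : 1 < ‖v‖)
    (hvq : ‖v * q‖ < 1) (s : ℕ) : Summable (fun n : ℤ => (v * q) ^ n * eR a q s n) :=
  Summable.of_norm_bounded ((bW_summable hv hvq).mul_left (gMs a q)) fun n =>
    eR_bound hq0 (v_ne hv) ha hq s n

lemma RR_norm {a q v : ℂ} (hq0 : q ≠ 0) (hq : ‖q‖ < 1) (ha : ‖a‖ < 1) (hv : 1 < ‖v‖)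
    (hvq : ‖v * q‖ < 1) (s : ℕ) : ‖RR a q v s‖ ≤ gMs a q * ∑' n, bW v q n :=
  tsum_of_norm_bounded ((bW_summable hv hvq).hasSum.mul_left (gMs a q)) fun n =>
    eR_bound hq0 (v_ne hv) ha hq s n

lemma RR_rec {a q v : ℂ} (hq0 : q ≠ 0) (hq : ‖q‖ < 1) (ha : ‖a‖ < 1) (hv : 1 < ‖v‖)
    (hvq : ‖v * q‖ < 1) (s : ℕ) : (1 - q ^ s / v) * RR a q v (s + 1) = (a - q ^ s / v) * RR a q v s := by
  have hv0 := v_ne hv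
  have hw0 : v * q ≠ 0 := mul_ne_zero hv0 hq0
  have shift : ∀ s, HasSum (fun n : ℤ => (v * q) ^ n * eR a q s (n + 1)) ((v * q)⁻¹ * RR a q v s) := by
    intro s
    have h1 := (RR_summable hq0 hq ha hv hvq s).hasSum
    have h2 := ((Equiv.addRight (1 : ℤ)).hasSum_iff.mpr h1).mul_left (v * q)⁻¹
    refine h2.congr_fun fun n => ?_
    simp only [Function.comp, Equiv.coe_addRight]
    rw [zpow_add_one₀ hw0]; field_simp
  have hs1 := ((shift (s + 1)).mul_left (q ^ (s + 1))).sub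
    (RR_summable hq0 hq ha hv hvq (s + 1)).hasSum
  have hs2 := ((shift s).mul_left (q ^ (s + 1))).sub
    ((RR_summable hq0 hq ha hv hvq s).hasSum.mul_left a)
  have heq := hs1.unique (hs2.congr_fun fun n => ?_)
  · change _ - RR a q v (s + 1) = _ - a * RR a q v s at heq
    have e : q ^ (s + 1) * (v * q)⁻¹ = q ^ s / v := by rw [pow_succ]; field_simp
    rw [← mul_assoc, ← mul_assoc, e] at heq
    linear_combination -heq
  · linear_combination (v * q) ^ n * eR_rec hq0 ha hq s n

lemma RR_zero {a q v : ℂ} (hq : ‖q‖ < 1) (ha : ‖a‖ < 1) (hvq : ‖v * q‖ < 1) : qPI a q / qPI q q * RR a q v 0 = qPI (a * (v * q)) q / qPI (v * q) q ∧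
    ∀ n : ℕ, qPI a q / qPI q q * gnF a q n * (v * q) ^ n = qB (v * q) (a * (v * q)) q n := by
  have hc : ∀ n : ℕ, qPI a q / qPI q q * gnF a q n * (v * q) ^ n
      = qB (v * q) (a * (v * q)) q n := by
    intro n
    have e0 := qB_scale 1 a q (v * q) n
    rw [one_mul] at e0
    rw [e0]
    congr 1
    have hqn : ‖q ^ n‖ ≤ 1 := by rw [norm_pow]; exact pow_le_one₀ (norm_nonneg _) hq.le
    rw [gnF, if_pos (by omega), zpow_natCast, GG_eq ha hq hqn]
    have h1 := qPI_split a hq n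
    have h2 := qPI_split q hq n
    have h3 := qPI_ne_zero ha hq
    have h4 := qPI_ne_zero hq hq
    rw [h1] at h3
    rw [h2] at h4
    have h5 := right_ne_zero_of_mul h3
    have h6 := right_ne_zero_of_mul h4
    have h7 := left_ne_zero_of_mul h4
    rw [h1, h2]
    have h8 : qB 1 a q n = qPF a q n / qPF q q n := by
      rw [qB, qPF, qPF, ← Finset.prod_div_distrib]
      exact Finset.prod_congr rfl fun i _ => by rw [pow_succ']
    rw [h8]
    generalize qPI (q * q ^ n) q = X at *
    generalize qPI (a * q ^ n) q = Y at *
    field_simp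
  refine ⟨?_, hc⟩
  rw [← qbinomial (a * (v * q)) hvq hq, RR, ← tsum_mul_left]
  rw [← Function.Injective.tsum_eq (g := ((↑) : ℕ → ℤ)) Nat.cast_injective]
  · refine tsum_congr fun n => ?_
    rw [← hc n, zpow_natCast]
    simp only [eR]; ring
  · intro n hn
    by_contra h
    apply hn
    have : ¬ 0 ≤ n := fun h' => h ⟨n.toNat, by simp [h']⟩
    simp [eR, gnF, this]

lemma one_sub_pow_div_ne {q v : ℂ} (hq : ‖q‖ < 1) (hv : 1 < ‖v‖) (s : ℕ) : 1 - q ^ s / v ≠ 0 := by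
  intro h
  have h1 : q ^ s / v = 1 := by linear_combination -h
  have h2 : ‖q ^ s / v‖ < 1 := by
    rw [norm_div, norm_pow, div_lt_one (by linarith)]
    exact (pow_le_one₀ (norm_nonneg _) hq.le).trans_lt hv
  rw [h1] at h2; simp at h2

lemma RR_formula {a q v : ℂ} (hq0 : q ≠ 0) (hq : ‖q‖ < 1) (ha : ‖a‖ < 1) (hv : 1 < ‖v‖)
    (hvq : ‖v * q‖ < 1) (ha0 : a ≠ 0) (s : ℕ) : qPI a q / qPI q q * RR a q v (s + 1) =
    qPI (a * v) q / qPI v q * (qPF (a⁻¹ * v⁻¹ * q) q s / qPF (v⁻¹ * q) q s) * a ^ s := by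
  have hv0 := v_ne hv
  have hne := one_sub_pow_div_ne hq hv
  have hPne : ∀ s, qPF (v⁻¹ * q) q s ≠ 0 := fun s => by
    rw [qPF, Finset.prod_ne_zero_iff]
    intro i _
    have := hne (i + 1)
    rw [pow_succ'] at this
    rwa [mul_assoc, inv_mul_eq_div]
  induction s with
  | zero =>
    have h1 := RR_rec hq0 hq ha hv hvq 0
    have h2 := (RR_zero hq ha hvq).1
    have h3 := hne 0
    have h4 := qPI_step (a * v) hq
    have h5 := qPI_step v hq
    have h6 := qPI_ne_zero hvq hq
    have hv1 : 1 - v ≠ 0 := fun h => by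
      have : v = 1 := by linear_combination -h
      rw [this] at hv; simp at hv
    rw [h4, h5]
    rw [pow_zero] at h1 h3
    have h7 : RR a q v (0 + 1) = (a - 1 / v) / (1 - 1 / v) * RR a q v 0 := by
      rw [div_mul_eq_mul_div, eq_div_iff h3]; linear_combination h1
    rw [h7]
    have h8 : (a - 1 / v) / (1 - 1 / v) = (1 - a * v) / (1 - v) := by
      rw [div_eq_div_iff h3 hv1]; field_simp; ring
    rw [h8]
    simp only [qPF, Finset.range_zero, Finset.prod_empty, pow_zero, mul_one, div_one]
    calc _ = (1 - a * v) / (1 - v) * (qPI a q / qPI q q * RR a q v 0) := by ring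
      _ = _ := by rw [h2, ← mul_assoc]; field_simp
  | succ s ih =>
    have h1 := RR_rec hq0 hq ha hv hvq (s + 1)
    have h3 := hne (s + 1)
    have h7 : RR a q v (s + 1 + 1) = (a - q ^ (s + 1) / v) / (1 - q ^ (s + 1) / v) * RR a q v (s + 1) := by
      rw [div_mul_eq_mul_div, eq_div_iff h3]; linear_combination h1
    rw [h7, qPF_succ, qPF_succ]
    have h8 := hPne s
    have h9 : (1 - v⁻¹ * q * q ^ s) = 1 - q ^ (s + 1) / v := by rw [pow_succ]; ring
    rw [h9]
    have h10 : a * (1 - a⁻¹ * v⁻¹ * q * q ^ s) = a - q ^ (s + 1) / v := by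
      rw [pow_succ]; field_simp
    rw [← h10]
    calc _ = a * (1 - a⁻¹ * v⁻¹ * q * q ^ s) / (1 - q ^ (s + 1) / v) *
        (qPI a q / qPI q q * RR a q v (s + 1)) := by ring
      _ = _ := by rw [ih, pow_succ, div_eq_mul_inv _ (_ * _), mul_inv]; ring

theorem P4_main {a q v y : ℂ} (hq0 : q ≠ 0) (hq : ‖q‖ < 1) (ha : ‖a‖ < 1) (hv : 1 < ‖v‖)
    (hvq : ‖v * q‖ < 1) (ha0 : a ≠ 0) (hav : ‖a * v‖ < 1) (hy : ‖y‖ < 1) (hyn : ∀ n : ℤ, q ^ n - y ≠ 0)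
    (hsum : Summable fun n : ℤ => (v * q) ^ n / (q ^ n - y)) :
    Summable (fun s : ℕ => ‖qPF (a⁻¹ * v⁻¹ * q) q s / qPF (v⁻¹ * q) q s * (a * y) ^ s‖) ∧
    ∑' n : ℕ, qB (v * q) (a * (v * q)) q n / (q ^ n - y) =
      qPI a q / qPI q q * (qPI (q * y) q / qPI (a * y) q) * (∑' n : ℤ, (v * q) ^ n / (q ^ n - y)) +
      qPI (a * v) q / qPI v q *
        ∑' s : ℕ, qPF (a⁻¹ * v⁻¹ * q) q s / qPF (v⁻¹ * q) q s * (a * y) ^ s := by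
  have hv0 := v_ne hv
  have hv1 : 1 - v ≠ 0 := fun h => by
    have : v = 1 := by linear_combination -h
    rw [this] at hv; simp at hv
  have hPv : qPI v q ≠ 0 := by
    rw [qPI_step v hq]; exact mul_ne_zero hv1 (qPI_ne_zero hvq hq)
  have hPav := qPI_ne_zero hav hq
  have hPa := qPI_ne_zero ha hq
  have hPq := qPI_ne_zero hq hq
  set K := qPI a q / qPI q q with hK
  have hK0 : K ≠ 0 := div_ne_zero hPa hPq
  have hterm : ∀ s : ℕ, K * (RR a q v (s + 1) * y ^ s) = qPI (a * v) q / qPI v q *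
      (qPF (a⁻¹ * v⁻¹ * q) q s / qPF (v⁻¹ * q) q s * (a * y) ^ s) := fun s => by
    rw [← mul_assoc, hK, RR_formula hq0 hq ha hv hvq ha0 s, mul_pow]; ring
  have hgeo := summable_geometric_of_lt_one (norm_nonneg _) hy
  have hRs : Summable (fun s : ℕ => ‖RR a q v (s + 1) * y ^ s‖) := by
    refine Summable.of_nonneg_of_le (fun _ => norm_nonneg _) (fun s => ?_)
      (hgeo.mul_left (gMs a q * ∑' n, bW v q n))
    rw [norm_mul, norm_pow]
    gcongr
    exact RR_norm hq0 hq ha hv hvq _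
  constructor
  · refine (hRs.mul_left ‖K * (qPI v q / qPI (a * v) q)‖).congr fun s => ?_
    rw [← norm_mul]
    congr 1
    calc _ = (qPI v q / qPI (a * v) q) * (K * (RR a q v (s + 1) * y ^ s)) := by ring
      _ = _ := by rw [hterm]; field_simp
  · have hG : qPI (q * y) q / qPI (a * y) q = GG a q y := (GG_eq ha hq hy.le).symm
    rw [hG]
    rw [← tsum_mul_left (a := qPI (a * v) q / qPI v q)]
    simp only [← hterm]
    rw [tsum_mul_left (a := K)]
    have hpt : ∀ n : ℤ, gnF a q n / (q ^ n - y) = GG a q y / (q ^ n - y) +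
        ∑' s : ℕ, eR a q (s + 1) n * y ^ s := by
      intro n
      have hes : ∀ i, Summable (fun s : ℕ => eR a q (s + i) n * y ^ s) := by
        intro i
        have hw : 0 < ‖(v * q) ^ n‖ := norm_pos_iff.mpr (zpow_ne_zero n (mul_ne_zero hv0 hq0))
        refine Summable.of_norm_bounded (hgeo.mul_left (gMs a q * bW v q n / ‖(v * q) ^ n‖))
          fun s => ?_
        rw [norm_mul, norm_pow]
        gcongr
        rw [le_div_iff₀ hw, mul_comm, ← norm_mul]
        exact eR_bound hq0 hv0 ha hq _ n
      have h0 : Summable (fun s : ℕ => eR a q s n * y ^ s) := hes 0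
      have h1 := hes 1
      have h2 := GG_summable ha hq hy.le
      have h3 : q ^ n * ∑' s : ℕ, eR a q (s + 1) n * y ^ s
          = (∑' s : ℕ, eR a q s n * y ^ s) - GG a q y := by
        rw [GG, ← h0.tsum_sub h2, ← tsum_mul_left]
        refine tsum_congr fun s => ?_
        rw [← mul_assoc, eR_succ hq0]; ring
      have h4 : (∑' s : ℕ, eR a q s n * y ^ s) = gnF a q n + y * ∑' s : ℕ, eR a q (s + 1) n * y ^ s := by
        rw [h0.tsum_eq_zero_add, ← tsum_mul_left]
        congr 1
        · simp [eR]
        · exact tsum_congr fun s => by rw [pow_succ]; ring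
      have := hyn n
      rw [eq_comm, div_add' _ _ _ this, div_left_inj' this]
      linear_combination h3 + h4
    have hLHS : ∑' n : ℕ, qB (v * q) (a * (v * q)) q n / (q ^ n - y)
        = ∑' n : ℤ, K * ((v * q) ^ n * (gnF a q n / (q ^ n - y))) := by
      rw [← Function.Injective.tsum_eq (g := ((↑) : ℕ → ℤ)) Nat.cast_injective]
      · refine tsum_congr fun n => ?_
        rw [← (RR_zero hq ha hvq).2 n, zpow_natCast, zpow_natCast]
        ring
      · intro n hn
        by_contra h
        apply hn
        have : ¬ 0 ≤ n := fun h' => h ⟨n.toNat, by simp [h']⟩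
        simp [gnF, this]
    have hdbl : Summable (Function.uncurry fun (n : ℤ) (s : ℕ) =>
        (v * q) ^ n * (eR a q (s + 1) n * y ^ s)) := by
      refine Summable.of_norm_bounded (((bW_summable hv hvq).mul_left (gMs a q)).mul_of_nonneg hgeo
        (fun n => mul_nonneg (tsum_nonneg fun _ => norm_nonneg _) (bW_nonneg v q n))
        (fun s => by positivity)) fun p => ?_
      simp only [Function.uncurry]
      rw [← mul_assoc, norm_mul, norm_pow]
      gcongr
      exact eR_bound hq0 hv0 ha hq _ _
    have hcomm := hdbl.tsum_comm
    have hR : ∑' s : ℕ, RR a q v (s + 1) * y ^ s =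
        ∑' n : ℤ, (v * q) ^ n * ∑' s : ℕ, eR a q (s + 1) n * y ^ s := by
      simp only [← tsum_mul_left]
      rw [← hcomm]
      refine tsum_congr fun s => ?_
      rw [RR, ← tsum_mul_right]
      exact tsum_congr fun n => by ring
    have hS2 : Summable (fun n : ℤ => (v * q) ^ n * ∑' s : ℕ, eR a q (s + 1) n * y ^ s) := by
      have := hdbl.prod
      simpa only [Function.uncurry, tsum_mul_left] using this
    rw [hLHS, hR, tsum_mul_left, mul_assoc, ← mul_add, ← tsum_mul_left (a := GG a q y),
      ← (hsum.mul_left (GG a q y)).tsum_add hS2]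
    congr 1
    refine tsum_congr fun n => ?_
    rw [hpt]; ring

end


section

/-- the analytic conditions used at a point near `1/2` -/
structure GoodPt (q : ℂ) : Prop where
  hre : 0 < q.re
  hq : ‖q‖ < 1
  h1 : 1 - q ≠ 0
  h2 : 1 - q + q ^ 2 ≠ 0
  hv : 1 < ‖vF q‖
  hvq : ‖vF q * q‖ < 1
  ha : ‖aF q‖ < 1
  huq : ‖uF q * q‖ < 1
  hy : ‖-(1 - 2 * q) / q ^ 2‖ < 1

lemma good_eventually : ∀ᶠ q in 𝓝 (1 / 2 : ℂ), GoodPt q := by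
  have e1 : (1 : ℂ) - 1 / 2 ≠ 0 := by norm_num
  have e2 : (1 : ℂ) - 1 / 2 + (1 / 2) ^ 2 ≠ 0 := by norm_num
  have e3 : (1 / 2 : ℂ) ^ 2 ≠ 0 := by norm_num
  have c1 : ContinuousAt (fun q : ℂ => q.re) (1 / 2) := Complex.continuous_re.continuousAt
  have c2 : ContinuousAt (fun q : ℂ => ‖q‖) (1 / 2) := by fun_prop
  have c3 : ContinuousAt (fun q : ℂ => 1 - q) (1 / 2) := by fun_prop
  have c4 : ContinuousAt (fun q : ℂ => 1 - q + q ^ 2) (1 / 2) := by fun_prop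
  have c5 : ContinuousAt vF (1 / 2) := by
    unfold vF; exact ContinuousAt.div (by fun_prop) (by fun_prop) e1
  have c6 : ContinuousAt aF (1 / 2) := by
    unfold aF; exact ContinuousAt.div (by fun_prop) (by fun_prop) e2
  have c7 : ContinuousAt uF (1 / 2) := by
    unfold uF; exact ContinuousAt.div (by fun_prop) (by fun_prop) e1
  have c8 : ContinuousAt (fun q : ℂ => -(1 - 2 * q) / q ^ 2) (1 / 2) :=
    ContinuousAt.div (by fun_prop) (by fun_prop) e3
  have v1 : vF (1 / 2) = 3 / 2 := by norm_num [vF]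
  have a1 : aF (1 / 2) = 1 / 3 := by norm_num [aF]
  have u1 : uF (1 / 2) = 1 := by norm_num [uF]
  filter_upwards [c1.eventually (lt_mem_nhds (show (0 : ℝ) < (1 / 2 : ℂ).re by norm_num)),
    c2.eventually (gt_mem_nhds (show ‖(1 / 2 : ℂ)‖ < 1 by norm_num)),
    c3.eventually_ne e1, c4.eventually_ne e2,
    c5.norm.eventually (lt_mem_nhds (show 1 < ‖vF (1 / 2 : ℂ)‖ by rw [v1]; norm_num)),
    (c5.mul continuousAt_id).norm.eventually
      (gt_mem_nhds (show ‖vF (1 / 2 : ℂ) * id (1 / 2)‖ < 1 by rw [v1]; norm_num)),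
    c6.norm.eventually (gt_mem_nhds (show ‖aF (1 / 2 : ℂ)‖ < 1 by rw [a1]; norm_num)),
    (c7.mul continuousAt_id).norm.eventually
      (gt_mem_nhds (show ‖uF (1 / 2 : ℂ) * id (1 / 2)‖ < 1 by rw [u1]; norm_num)),
    c8.norm.eventually
      (gt_mem_nhds (show ‖-(1 - 2 * (1 / 2 : ℂ)) / (1 / 2) ^ 2‖ < 1 by norm_num))]
    with q p1 p2 p3 p4 p5 p6 p7 p8 p9
  exact ⟨p1, p2, p3, p4, p5, p6, p7, p8, p9⟩

lemma arg_t {q : ℂ} (hq : q ≠ 1 / 2) (h : 1 < |arg (q - 1 / 2)|) :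
    |arg (1 - 2 * q)| < Real.pi - 1 := by
  have hε : q - 1 / 2 ≠ 0 := sub_ne_zero.mpr hq
  have ht : 1 - 2 * q = ((-2 : ℝ) : ℂ) * (q - 1 / 2) := by push_cast; ring
  have ht0 : 1 - 2 * q ≠ 0 := by rw [ht]; exact mul_ne_zero (by norm_num) hε
  have hpi := Real.pi_gt_three
  have c1 : Real.cos |arg (1 - 2 * q)| = -Real.cos |arg (q - 1 / 2)| := by
    rw [Real.cos_abs, Real.cos_abs, Complex.cos_arg ht0, Complex.cos_arg hε, ht,
      Complex.re_ofReal_mul, norm_mul, norm_real]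
    have : 0 < ‖q - 1 / 2‖ := norm_pos_iff.mpr hε
    norm_num
    field_simp
  have c2 : Real.cos |arg (q - 1 / 2)| < Real.cos 1 :=
    Real.strictAntiOn_cos ⟨by norm_num, by linarith⟩ ⟨abs_nonneg _, abs_arg_le_pi _⟩ h
  refine (Real.strictAntiOn_cos.lt_iff_gt ⟨by linarith, by linarith⟩
    ⟨abs_nonneg _, abs_arg_le_pi _⟩).mp ?_
  rw [Real.cos_pi_sub, c1]
  linarith

lemma strip_eventually : ∀ᶠ q in 𝓝 (1 / 2 : ℂ), q ≠ 1 / 2 → 1 < |arg (q - 1 / 2)| →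
    |(log (1 - 2 * q) / log (1 / q)).im| < Real.pi * (1 / log (1 / q)).re := by
  have hd : DifferentiableAt ℂ (fun q : ℂ => log (1 / q)) (1 / 2) := by
    refine DifferentiableAt.clog (DifferentiableAt.div (by fun_prop) (by fun_prop) (by norm_num)) ?_
    left; norm_num
  have hL2 : log (1 / (1 / 2 : ℂ)) = ((Real.log 2 : ℝ) : ℂ) := by
    rw [one_div_one_div, ofReal_log (by norm_num)]; norm_num
  obtain ⟨C, hC⟩ := hd.isBigO_sub.bound
  have hlog2 : 0 < Real.log 2 := Real.log_pos (by norm_num)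
  have hcr : ContinuousAt (fun q : ℂ => (log (1 / q)).re) (1 / 2) :=
    Complex.continuous_re.continuousAt.comp hd.continuousAt
  have ev1 := hcr.eventually (lt_mem_nhds (show Real.log 2 / 2 < (log (1 / (1 / 2 : ℂ))).re by
    rw [hL2, ofReal_re]; linarith))
  have hct : ContinuousAt (fun q : ℂ => |C| * |‖1 - 2 * q‖ * Real.log ‖1 - 2 * q‖|) (1 / 2) := by
    have := Real.continuous_mul_log
    have h2 : Continuous (fun q : ℂ => ‖1 - 2 * q‖) := by fun_prop
    exact (continuous_const.mul (continuous_abs.comp (this.comp h2))).continuousAt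
  have ev2 := hct.eventually (gt_mem_nhds (show |C| * |‖1 - 2 * (1 / 2 : ℂ)‖ *
    Real.log ‖1 - 2 * (1 / 2 : ℂ)‖| < Real.log 2 / 2 by norm_num; exact hlog2))
  filter_upwards [hC, ev1, ev2] with q h1 h2 h3 hne harg
  have ha := arg_t hne harg
  set L := log (1 / q) with hL
  have hLr : 0 < L.re := by linarith
  have hL0 : L ≠ 0 := fun h => by rw [h] at hLr; simp at hLr
  have hns : 0 < normSq L := normSq_pos.mpr hL0
  set τ := log (1 - 2 * q) with hτ
  have hτi : τ.im = arg (1 - 2 * q) := Complex.log_im _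
  have hτr : τ.re = Real.log ‖1 - 2 * q‖ := Complex.log_re _
  have hLi : |L.im| ≤ |C| * ‖1 - 2 * q‖ := by
    rw [hL2] at h1
    have e1 : L.im = (L - ((Real.log 2 : ℝ) : ℂ)).im := by
      rw [Complex.sub_im, Complex.ofReal_im, sub_zero]
    rw [e1]
    refine (Complex.abs_im_le_norm _).trans (h1.trans ?_)
    have e2 : ‖1 - 2 * q‖ = 2 * ‖q - 1 / 2‖ := by
      rw [show 1 - 2 * q = (-2) * (q - 1 / 2) by ring, norm_mul]; norm_num
    rw [e2]
    have := norm_nonneg (q - 1 / 2)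
    have := le_abs_self C
    have := abs_nonneg C
    nlinarith
  have e1 : (τ / L).im = (τ.im * L.re - τ.re * L.im) / normSq L := by
    rw [Complex.div_im]; ring
  have e2 : (1 / L).re = L.re / normSq L := by rw [one_div, Complex.inv_re]
  rw [e1, e2, abs_div, abs_of_pos hns, ← mul_div_assoc]
  refine div_lt_div_of_pos_right ?_ hns
  have b1 : |τ.re * L.im| < L.re := by
    calc |τ.re * L.im| = |τ.re| * |L.im| := abs_mul _ _
      _ ≤ |τ.re| * (|C| * ‖1 - 2 * q‖) := by gcongr
      _ = |C| * |‖1 - 2 * q‖ * Real.log ‖1 - 2 * q‖| := by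
          rw [abs_mul, abs_norm, hτr]; ring
      _ < L.re := by linarith
  have b2 : |τ.im * L.re| ≤ (Real.pi - 1) * L.re := by
    rw [abs_mul, abs_of_pos hLr, hτi]; gcongr
  have := abs_sub (τ.im * L.re) (τ.re * L.im)
  linarith

lemma assembly {q : ℂ} (g : GoodPt q) (hq2 : q ≠ 1 / 2)
    (hs : |(log (1 - 2 * q) / log (1 / q)).im| < Real.pi * (1 / log (1 / q)).re) :
    Summable (fun k : ℤ => ‖pcoefC q k *
              Complex.exp (-2 * (Real.pi : ℂ) * Complex.I * (k : ℂ) *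
                (Complex.log (1 - 2 * q) / Complex.log (1 / q)))‖) ∧
            Summable (fun r : ℕ => ‖VtermC q r‖) ∧
            fF q =
              DF q - q ^ 2 * AF q *
                (qPI (aF q) q * qPI (vF q) q / (qPI q q * qPI (aF q * vF q) q)) *
                (Complex.exp (-(gammaC q) * Complex.log (1 - 2 * q)) *
                    PiC q (Complex.log (1 - 2 * q) / Complex.log (1 / q)) * UfunC q +
                  VfunC q) := by
  obtain ⟨hre, hq, h1, h2, hv, hvq, ha, huq, hy⟩ := g
  have hq0 : q ≠ 0 := fun h => by rw [h] at hre; simp at hre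
  have ht0 : 1 - 2 * q ≠ 0 := fun h => hq2 (by linear_combination (-1 / 2) * h)
  have hvne : vF q ≠ 0 := fun h => by rw [h] at hv; simp at hv; linarith
  have hw0 : vF q * q ≠ 0 := mul_ne_zero hvne hq0
  have hav : aF q * vF q = uF q * q := by
    unfold aF vF uF; field_simp
  have ha0 : aF q ≠ 0 := div_ne_zero (pow_ne_zero 2 hq0) h2
  -- the logarithms
  set L := log (1 / q) with hL
  set β := log (vF q) with hβ
  set τ := log (1 - 2 * q) with hτ
  have hLneg : L = -log q := by
    rw [hL, one_div, Complex.log_inv]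
    intro h
    have := Complex.arg_eq_pi_iff.mp h
    linarith
  have hexpL : exp L = q⁻¹ := by rw [hLneg, exp_neg, exp_log hq0]
  have hexpβ : exp β = vF q := exp_log hvne
  have hexpτ : exp τ = 1 - 2 * q := exp_log ht0
  have hβre : 0 < β.re := by rw [hβ, Complex.log_re]; exact Real.log_pos hv
  have hLre : β.re < L.re := by
    rw [hβ, hL, Complex.log_re, Complex.log_re]
    apply Real.log_lt_log (by linarith)
    rw [norm_div, norm_one, lt_div_iff₀ (norm_pos_iff.mpr hq0), ← norm_mul]
    exact hvq
  have hL0 : L ≠ 0 := fun h => by rw [h] at hLre; simp at hLre; linarith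
  obtain ⟨f1, f2, f3, f4⟩ := fourier_main hβre hLre hs
  have hp : ∀ k, pcoefC q k = PPn β L k := fun k => rfl
  have hexpn : ∀ n : ℤ, exp (L * (τ / L + n)) = (1 - 2 * q) * (q ^ n)⁻¹ := by
    intro n
    rw [mul_add, mul_div_cancel₀ _ hL0, exp_add, hexpτ, mul_comm L, Complex.exp_int_mul, hexpL,
      inv_zpow]
  have hne : ∀ n : ℤ, q ^ n + (1 - 2 * q) ≠ 0 := by
    intro n h
    have hx : q ^ n ≠ 0 := zpow_ne_zero n hq0
    apply f2 n
    rw [hexpn]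
    have : 1 + (1 - 2 * q) * (q ^ n)⁻¹ = (q ^ n + (1 - 2 * q)) / q ^ n := by field_simp
    rw [this, h, zero_div]
  have hFF : ∀ n : ℤ, FFn β L (τ / L + n) =
      exp (gammaC q * τ) * ((vF q * q) ^ n / (q ^ n + (1 - 2 * q))) := by
    intro n
    have hx : q ^ n ≠ 0 := zpow_ne_zero n hq0
    have hn := hne n
    have e1 : exp (β * (τ / L + n)) = exp (gammaC q * τ) * vF q ^ n := by
      rw [mul_add, exp_add, mul_comm β n, Complex.exp_int_mul, hexpβ, gammaC]
      congr 2; ring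
    rw [FFn, hexpn, e1, mul_zpow]
    have : 1 + (1 - 2 * q) * (q ^ n)⁻¹ = (q ^ n + (1 - 2 * q)) / q ^ n := by field_simp
    rw [this]
    field_simp
  set y := -(1 - 2 * q) / q ^ 2 with hydef
  have hyq : ∀ n : ℤ, q ^ n - y = (q ^ (n + 2) + (1 - 2 * q)) / q ^ 2 := by
    intro n
    rw [zpow_add₀ hq0, hydef]; norm_cast; field_simp; ring
  have hyn : ∀ n : ℤ, q ^ n - y ≠ 0 := fun n => by
    rw [hyq]; exact div_ne_zero (hne _) (pow_ne_zero 2 hq0)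
  -- bilateral sum
  have hZ : HasSum (fun n : ℤ => (vF q * q) ^ n / (q ^ n - y))
      (q ^ 2 / (vF q * q) ^ 2 * exp (-(gammaC q) * τ) * (1 / L * PiC q (τ / L))) := by
    have s1 : HasSum (fun n : ℤ => FFn β L (τ / L + n)) (1 / L * PiC q (τ / L)) := by
      have : 1 / L * PiC q (τ / L) = ∑' n : ℤ, FFn β L (τ / L + n) := f4.symm
      rw [this]
      exact f1.of_norm.hasSum
    have s2 := ((Equiv.addRight (2 : ℤ)).hasSum_iff.mpr s1).mul_left
      (q ^ 2 / (vF q * q) ^ 2 * exp (-(gammaC q) * τ))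
    refine s2.congr_fun fun n => ?_
    simp only [Function.comp, Equiv.coe_addRight]
    rw [hFF, hyq]
    have e3 : exp (-(gammaC q) * τ) * exp (gammaC q * τ) = 1 := by
      rw [← exp_add]; simp
    have e4 : (vF q * q) ^ (n + 2) = (vF q * q) ^ n * (vF q * q) ^ 2 := by
      rw [zpow_add₀ hw0]; norm_cast
    have hn := hne (n + 2)
    rw [e4]
    have hw2 : (vF q * q) ^ 2 ≠ 0 := pow_ne_zero 2 hw0
    generalize (vF q * q) ^ 2 = W at *
    generalize q ^ (n + 2) + (1 - 2 * q) = X at *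
    generalize (vF q * q) ^ n = Y at *
    calc Y / (X / q ^ 2) = 1 * (Y * q ^ 2 / X) := by field_simp
      _ = _ := by rw [← e3]; field_simp
  have hav1 : ‖aF q * vF q‖ < 1 := by rw [hav]; exact huq
  obtain ⟨m1, m2⟩ := P4_main hq0 hq ha hv hvq ha0 hav1 hy hyn hZ.summable
  have hVt : ∀ r, VtermC q r = qPF ((aF q)⁻¹ * (vF q)⁻¹ * q) q r / qPF ((vF q)⁻¹ * q) q r
      * (aF q * y) ^ r := fun r => by
    rw [VtermC]; congr 2; rw [hydef]; ring
  refine ⟨f3, ?_, ?_⟩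
  · simpa only [hVt] using m1
  rw [hZ.tsum_eq] at m2
  simp only [← hVt] at m2
  -- the unilateral sum
  have hS : ∑' n, qB (vF q * q) (uF q * q ^ 2) q n * (1 / (1 - 2 * q + q ^ (n + 2))) =
      1 / q ^ 2 * ∑' n : ℕ, qB (vF q * q) (aF q * (vF q * q)) q n / (q ^ n - y) := by
    rw [← tsum_mul_left]
    refine tsum_congr fun n => ?_
    have e1 : uF q * q ^ 2 = aF q * (vF q * q) := by rw [← mul_assoc, hav]; ring
    have e2 := hyq n
    have e3 := hne (n + 2)
    rw [zpow_natCast] at e2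
    have e4 : q ^ ((n : ℤ) + 2) = q ^ (n + 2) := by norm_cast
    rw [e4] at e2 e3
    rw [e1, e2, add_comm (1 - 2 * q)]
    field_simp
  have hU : UfunC q = 1 / (vF q * q) ^ 2 / L * (qPI (q * y) q / qPI (aF q * y) q) := by
    rw [UfunC]
    have e1 : vF q * q ^ (3 * gammaC q - 2) = 1 / (vF q * q) ^ 2 := by
      rw [cpow_def_of_ne_zero hq0]
      have : log q * (3 * gammaC q - 2) = -(3 * β) + 2 * L := by
        have : log q = -L := by rw [hLneg]; ring
        rw [this, gammaC, ← hβ, ← hL]; field_simp; ring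
      rw [this, exp_add, exp_neg, show (3 : ℂ) * β = ((3 : ℕ) : ℂ) * β by norm_num,
        show (2 : ℂ) * L = ((2 : ℕ) : ℂ) * L by norm_num, Complex.exp_nat_mul, Complex.exp_nat_mul,
        hexpβ, hexpL]
      field_simp
    have e2 : -(q⁻¹ * (1 - 2 * q)) = q * y := by rw [hydef]; field_simp
    have e3 : -(aF q * q⁻¹ ^ 2 * (1 - 2 * q)) = aF q * y := by rw [hydef]; field_simp
    rw [e1, e2, e3]
  have hv1 : 1 - vF q = -(q ^ 2 / (1 - q)) := by unfold vF; field_simp; ring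
  have hPvq := qPI_ne_zero hvq hq
  have hPv : qPI (vF q) q = -(q ^ 2 / (1 - q)) * qPI (vF q * q) q := by
    rw [qPI_step _ hq, hv1]
  have hPv0 : qPI (vF q) q ≠ 0 := by
    rw [hPv]
    exact mul_ne_zero (neg_ne_zero.mpr (div_ne_zero (pow_ne_zero 2 hq0) h1)) hPvq
  have hPa := qPI_ne_zero ha hq
  have hPq := qPI_ne_zero hq hq
  have hPav := qPI_ne_zero hav1 hq
  have hfac : (1 / q ^ 2) / (1 + (1 - 2 * q) / q ^ 2) = 1 / (1 - q) ^ 2 := by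
    have : 1 + (1 - 2 * q) / q ^ 2 = (1 - q) ^ 2 / q ^ 2 := by field_simp; ring
    rw [this]; field_simp
  rw [fF, qbinomial _ huq hq, ← hav, hS, m2, DF, VfunC, hU, hfac]
  have hvq' : q ^ 4 * AF q / (1 - q) * (qPI (vF q * q) q / qPI (aF q * vF q) q)
      = -(q ^ 2 * AF q * (qPI (vF q) q / qPI (aF q * vF q) q)) := by
    rw [hPv]; field_simp
  rw [hvq']
  generalize qPI (vF q) q = Pv at *
  generalize qPI (aF q * vF q) q = Pav at *
  generalize qPI (aF q) q = Pa at *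
  generalize qPI q q = Pq at *
  generalize qPI (q * y) q / qPI (aF q * y) q = Gy at *
  generalize exp (-(gammaC q) * τ) = E at *
  generalize PiC q (τ / L) = Pi at *
  generalize (∑' r, VtermC q r) = SV at *
  generalize AF q = A at *
  generalize CF q = Cc at *
  generalize vF q = vv at *
  clear_value L
  field_simp
  ring

end

/-- In a sector anchored at `1/2` of angle `θ₀ < π/2`, the analytic continuation of
`PA(q)` admits the singular-plus-regular representation, all series converging
absolutely. -/
theorem PA_singular_regular_decomposition_sector :
    ∃ f : ℂ → ℂ,
      AnalyticOnNhd ℂ f slitDisc ∧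
      (∀ z : ℂ, ‖z‖ < 1 / 10 → f z = PAseries z) ∧
      ∃ θ₀ : ℝ, 0 < θ₀ ∧ θ₀ < Real.pi / 2 ∧
        ∃ r₀ : ℝ, 0 < r₀ ∧
          ∀ q : ℂ, q ≠ 1 / 2 → ‖q - 1 / 2‖ < r₀ → θ₀ < |Complex.arg (q - 1 / 2)| →
            Summable (fun k : ℤ => ‖pcoefC q k *
              Complex.exp (-2 * (Real.pi : ℂ) * Complex.I * (k : ℂ) *
                (Complex.log (1 - 2 * q) / Complex.log (1 / q)))‖) ∧
            Summable (fun r : ℕ => ‖VtermC q r‖) ∧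
            f q =
              DF q - q ^ 2 * AF q *
                (qPI (aF q) q * qPI (vF q) q / (qPI q q * qPI (aF q * vF q) q)) *
                (Complex.exp (-(gammaC q) * Complex.log (1 - 2 * q)) *
                    PiC q (Complex.log (1 - 2 * q) / Complex.log (1 / q)) * UfunC q +
                  VfunC q) := by
  obtain ⟨r₀, hr₀, H⟩ := Metric.eventually_nhds_iff.mp (good_eventually.and strip_eventually)
  refine ⟨fF, fF_analytic, fun z hz => fF_eq_series hz, 1, one_pos, ?_, r₀, hr₀, ?_⟩
  · have := Real.pi_gt_three
    linarith
  · intro q hq hr harg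
    obtain ⟨g, hs⟩ := H (y := q) (by rwa [dist_eq_norm])
    exact assembly g hq (hs hq harg)
end
end

section
/- Define the regular part PA^{reg}(q) = D(q) - q² A(q) · ( (a(q);q)_∞ (v(q);q)_∞ / ((q;q)_∞ (a(q)v(q);q)_∞) ) · V(q). Then even though A(q) and D(q) each have a double pole at q = 1/2, the double-pole contributions cancel: PA^{reg}(q) - 1/(1-2q) extends to a function analytic in a neighbourhood of q = 1/2. In particular, PA^{reg} has at q = 1/2 only a simple pole, with singular part exactly 1/(1-2q). -/
open Complex Filter Asymptotics Topology

noncomputable section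

/-- the regular part `PA^{reg}(q)` -/
def PAreg (q : ℂ) : ℂ :=
  DF q - q ^ 2 * AF q *
    (qPI (aF q) q * qPI (vF q) q / (qPI q q * qPI (aF q * vF q) q)) * VfunC q

theorem one_add_tprod_ne (x q : ℂ) (hq : ‖q‖ < 1) (h : ∀ i : ℕ, 1 - x * q ^ i ≠ 0) :
    qPI x q ≠ 0 := by
  unfold qPI
  have hs : Summable fun i : ℕ => ‖-(x * q ^ i)‖ := by
    simp only [norm_neg, norm_mul, norm_pow]
    exact (summable_geometric_of_lt_one (norm_nonneg _) hq).mul_left _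
  have := tprod_one_add_ne_zero_of_summable (f := fun i : ℕ => -(x * q ^ i))
    (fun i => by rw [← sub_eq_add_neg]; exact h i) hs
  simpa only [← sub_eq_add_neg] using this

theorem fac_ne {x q : ℂ} (hq : ‖q‖ < 1) (hx : ‖x‖ < 1) (i : ℕ) : 1 - x * q ^ i ≠ 0 := by
  intro h
  have h1 : x * q ^ i = 1 := (sub_eq_zero.mp h).symm
  have h2 : ‖x‖ * ‖q‖ ^ i = 1 := by rw [← norm_pow, ← norm_mul, h1, norm_one]
  have h3 : ‖q‖ ^ i ≤ 1 := pow_le_one₀ (norm_nonneg _) hq.le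
  nlinarith [norm_nonneg x]

/-- The disc on which everything is controlled. -/
def Bd : Set ℂ := Metric.ball (1 / 2 : ℂ) (1 / 32)

def yR (q : ℂ) : ℂ := q * (1 - q) / (1 - q + q ^ 2)
def zR (q : ℂ) : ℂ := -(1 - 2 * q) / (1 - q + q ^ 2)
def FR (i : ℕ) (q : ℂ) : ℂ := (1 - (1 - q) * q ^ i) / (1 - yR q * q ^ (i + 1)) * zR q
def KR (q : ℂ) : ℂ := 1 / (q * (1 - 2 * q + 2 * q ^ 2))
def HR (r : ℕ) (q : ℂ) : ℂ := ∏ i ∈ Finset.range r, FR i q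

theorem bnd {q : ℂ} (h : q ∈ Bd) : ‖q‖ ≤ 17 / 32 ∧ 15 / 32 ≤ ‖q‖ ∧ ‖1 - q‖ ≤ 17 / 32 ∧
    15 / 32 ≤ ‖1 - q‖ ∧ 767 / 1024 ≤ ‖1 - q + q ^ 2‖ ∧ ‖1 - q + q ^ 2‖ ≤ 769 / 1024 ∧
    ‖1 - 2 * q‖ ≤ 1 / 16 ∧ 1 / 4 ≤ ‖1 - 2 * q + 2 * q ^ 2‖ := by
  obtain ⟨d, rfl⟩ : ∃ d, q = 1 / 2 + d := ⟨q - 1 / 2, by ring⟩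
  have hd : ‖d‖ < 1 / 32 := by simpa [Bd, dist_eq_norm] using h
  have hd2 : ‖d ^ 2‖ ≤ 1 / 1024 := by
    rw [norm_pow]; nlinarith [norm_nonneg d]
  have n2 : ‖(1 / 2 : ℂ)‖ = 1 / 2 := by norm_num
  have n3 : ‖(3 / 4 : ℂ)‖ = 3 / 4 := by norm_num
  have e1 : (1 : ℂ) - (1 / 2 + d) = 1 / 2 - d := by ring
  have e2 : (1 : ℂ) - (1 / 2 + d) + (1 / 2 + d) ^ 2 = 3 / 4 + d ^ 2 := by ring
  have e3 : (1 : ℂ) - 2 * (1 / 2 + d) = -(2 * d) := by ring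
  have e4 : (1 : ℂ) - 2 * (1 / 2 + d) + 2 * (1 / 2 + d) ^ 2 = 1 / 2 + 2 * d ^ 2 := by ring
  have m3 : ‖-(2 * d)‖ = 2 * ‖d‖ := by simp
  have m4 : ‖2 * d ^ 2‖ = 2 * ‖d ^ 2‖ := by simp
  rw [e4, e2, e3, e1, m3]
  have a1 := norm_add_le (1 / 2 : ℂ) d
  have a2 := norm_sub_le_norm_add (1 / 2 : ℂ) d
  have a3 := norm_sub_le (1 / 2 : ℂ) d
  have a4 := norm_sub_norm_le (1 / 2 : ℂ) d
  have a5 := norm_add_le (3 / 4 : ℂ) (d ^ 2)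
  have a6 := norm_sub_le_norm_add (3 / 4 : ℂ) (d ^ 2)
  have a7 := norm_sub_le_norm_add (1 / 2 : ℂ) (2 * d ^ 2)
  refine ⟨?_, ?_, ?_, ?_, ?_, ?_, ?_, ?_⟩ <;> linarith

theorem ne_of_norm {x : ℂ} {c : ℝ} (hc : 0 < c) (h : c ≤ ‖x‖) : x ≠ 0 :=
  norm_pos_iff.mp (hc.trans_le h)

theorem yR_bd {q : ℂ} (h : q ∈ Bd) : ‖yR q‖ ≤ 1 / 2 := by
  obtain ⟨h1, h2, h3, h4, h5, h6, h7, h8⟩ := bnd h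
  rw [yR, norm_div, norm_mul, div_le_iff₀ (by linarith)]
  nlinarith [norm_nonneg q, norm_nonneg (1 - q)]

theorem den_bd {q : ℂ} (h : q ∈ Bd) (i : ℕ) : 1 / 2 ≤ ‖1 - yR q * q ^ i‖ := by
  have h1 := (bnd h).1
  have a := norm_sub_norm_le (1 : ℂ) (yR q * q ^ i)
  rw [norm_mul, norm_pow, norm_one] at a
  have h3 : ‖q‖ ^ i ≤ 1 := pow_le_one₀ (norm_nonneg _) (by linarith)
  have := yR_bd h
  nlinarith [norm_nonneg (yR q), pow_nonneg (norm_nonneg q) i]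

theorem FR_bd {q : ℂ} (h : q ∈ Bd) (i : ℕ) : ‖FR i q‖ ≤ 1 / 2 := by
  obtain ⟨h1, h2, h3, h4, h5, h6, h7, h8⟩ := bnd h
  have hz : ‖zR q‖ ≤ 1 / 8 := by
    rw [zR, norm_div, norm_neg, div_le_iff₀ (by linarith)]; linarith
  have hp : ‖q‖ ^ i ≤ 1 := pow_le_one₀ (norm_nonneg _) (by linarith)
  have hn : ‖1 - (1 - q) * q ^ i‖ ≤ 2 := by
    have a := norm_sub_le (1 : ℂ) ((1 - q) * q ^ i)
    rw [norm_mul, norm_pow, norm_one] at a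
    nlinarith [norm_nonneg (1 - q), pow_nonneg (norm_nonneg q) i]
  have hd := den_bd h (i + 1)
  have hf : ‖(1 - (1 - q) * q ^ i) / (1 - yR q * q ^ (i + 1))‖ ≤ 4 := by
    rw [norm_div, div_le_iff₀ (by linarith)]; linarith
  rw [FR, norm_mul]
  nlinarith [norm_nonneg (zR q), norm_nonneg ((1 - (1 - q) * q ^ i) / (1 - yR q * q ^ (i + 1)))]

theorem HR_bd (r : ℕ) (q : ℂ) (h : q ∈ Bd) : ‖HR r q‖ ≤ (1 / 2 : ℝ) ^ r := by
  rw [HR, norm_prod]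
  calc _ ≤ ∏ _i ∈ Finset.range r, (1 / 2 : ℝ) :=
        Finset.prod_le_prod (fun _ _ => norm_nonneg _) (fun i _ => FR_bd h i)
    _ = _ := by simp

theorem HR_diff (r : ℕ) : DifferentiableOn ℂ (HR r) Bd := by
  unfold HR
  intro q h
  obtain ⟨h1, h2, h3, h4, h5, h6, h7, h8⟩ := bnd h
  have n5 := ne_of_norm (by norm_num) h5
  apply DifferentiableAt.differentiableWithinAt
  apply DifferentiableAt.fun_finsetProd
  intro i _
  have hd := ne_of_norm (by norm_num) (den_bd h (i + 1))
  have hy : DifferentiableAt ℂ yR q := by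
    unfold yR
    exact DifferentiableAt.div (by fun_prop) (by fun_prop) n5
  have hz : DifferentiableAt ℂ zR q := by
    unfold zR
    exact DifferentiableAt.div (by fun_prop) (by fun_prop) n5
  unfold FR
  have hp : DifferentiableAt ℂ (fun q : ℂ => 1 - yR q * q ^ (i + 1)) q :=
    (differentiableAt_const _).sub (hy.mul (by fun_prop))
  exact (DifferentiableAt.fun_div (by fun_prop) hp hd).mul hz

theorem HR_summable {q : ℂ} (h : q ∈ Bd) : Summable fun r => HR r q :=
  Summable.of_norm_bounded (summable_geometric_of_lt_one (by norm_num) (by norm_num))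
    (fun r => HR_bd r q h)

theorem SR_diff : DifferentiableOn ℂ (fun q => ∑' r, HR r q) Bd :=
  differentiableOn_tsum_of_summable_norm
    (summable_geometric_of_lt_one (by norm_num) (by norm_num : (1 / 2 : ℝ) < 1))
    HR_diff Metric.isOpen_ball HR_bd

theorem Vterm_succ {q : ℂ} (h : q ∈ Bd) (r : ℕ) :
    VtermC q (r + 1) = (1 - 2 * q) ^ 2 * KR q * HR r q := by
  obtain ⟨h1, h2, h3, h4, h5, h6, h7, h8⟩ := bnd h
  have n2 := ne_of_norm (by norm_num) h2
  have n4 := ne_of_norm (by norm_num) h4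
  have n5 := ne_of_norm (by norm_num) h5
  have n8 := ne_of_norm (by norm_num) h8
  have e1 : (aF q)⁻¹ * (vF q)⁻¹ * q = (1 - q) / q := by
    unfold aF vF; field_simp
  have e2 : (vF q)⁻¹ * q = yR q := by
    unfold vF yR; field_simp
  have e3 : -(aF q) * (1 - 2 * q) / q ^ 2 = zR q := by
    unfold aF zR; field_simp
  unfold VtermC
  rw [e1, e2, e3]
  have n9 : 1 - yR q ≠ 0 := by simpa using ne_of_norm (by norm_num) (den_bd h 0)
  have hk : (1 - (1 - q) / q) / (1 - yR q) * zR q = (1 - 2 * q) ^ 2 * KR q := by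
    have : 1 - yR q = (1 - 2 * q + 2 * q ^ 2) / (1 - q + q ^ 2) := by
      unfold yR; field_simp; ring
    rw [this]; unfold zR KR; field_simp; ring
  induction r with
  | zero => simpa [qPF, HR] using hk
  | succ r ih =>
    have hH : HR (r + 1) q = HR r q * FR r q := by simp [HR, Finset.prod_range_succ]
    have q1 : ∀ x n, qPF x q (n + 1) = qPF x q n * (1 - x * q ^ n) := by
      intro x n; simp [qPF, Finset.prod_range_succ]
    rw [hH, ← mul_assoc, ← ih, q1 _ (r + 1), q1 _ (r + 1), FR, pow_succ (zR q) (r + 1)]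
    have : (1 - q) / q * q ^ (r + 1) = (1 - q) * q ^ r := by field_simp; ring
    rw [this, mul_div_mul_comm]; ring

theorem tsum_V {q : ℂ} (h : q ∈ Bd) :
    ∑' r, VtermC q r = 1 + (1 - 2 * q) ^ 2 * KR q * ∑' r, HR r q := by
  have hs : Summable fun r => VtermC q (r + 1) := by
    simp only [Vterm_succ h]; exact (HR_summable h).mul_left _
  rw [((summable_nat_add_iff 1).mp hs).tsum_eq_zero_add]
  simp only [Vterm_succ h, tsum_mul_left]
  simp [VtermC, qPF]

theorem PAreg_eq {q : ℂ} (h : q ∈ Bd) (ht : 1 - 2 * q ≠ 0) :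
    PAreg q = 1 / (1 - 2 * q) +
      ((3 * q - 1) / (1 - q) - 2 * q * (1 - q) ^ 2 * KR q * ∑' r, HR r q) := by
  obtain ⟨h1, h2, h3, h4, h5, h6, h7, h8⟩ := bnd h
  have n2 := ne_of_norm (by norm_num) h2
  have n4 := ne_of_norm (by norm_num) h4
  have n5 := ne_of_norm (by norm_num) h5
  have hq : ‖q‖ < 1 := by linarith
  have nQ : qPI q q ≠ 0 := one_add_tprod_ne _ _ hq (fac_ne hq hq)
  have nA : qPI (aF q) q ≠ 0 := by
    refine one_add_tprod_ne _ _ hq (fac_ne hq ?_)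
    rw [aF, norm_div, norm_pow, div_lt_one (by linarith)]
    nlinarith
  have nW : qPI (aF q * vF q) q ≠ 0 := by
    have : aF q * vF q = q ^ 2 / (1 - q) := by unfold aF vF; field_simp
    rw [this]
    refine one_add_tprod_ne _ _ hq (fac_ne hq ?_)
    rw [norm_div, norm_pow, div_lt_one (by linarith)]
    nlinarith
  have nV : qPI (vF q) q ≠ 0 := by
    refine one_add_tprod_ne _ _ hq ?_
    intro i
    cases i with
    | zero =>
      have : 1 - vF q * q ^ 0 = - q ^ 2 / (1 - q) := by unfold vF; field_simp; ring
      rw [this]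
      exact div_ne_zero (neg_ne_zero.mpr (pow_ne_zero _ n2)) n4
    | succ i =>
      have : vF q * q ^ (i + 1) = (vF q * q) * q ^ i := by ring
      rw [this]
      refine fac_ne hq ?_ i
      rw [vF, norm_mul, norm_div, div_mul_eq_mul_div, div_lt_one (by linarith)]
      nlinarith
  have key : PAreg q = CF q - AF q * ∑' r, VtermC q r := by
    unfold PAreg DF VfunC
    have e : (1 / q ^ 2) / (1 + (1 - 2 * q) / q ^ 2) = 1 / (1 - q) ^ 2 := by
      have : 1 + (1 - 2 * q) / q ^ 2 = (1 - q) ^ 2 / q ^ 2 := by field_simp; ring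
      rw [this]; field_simp
    rw [e]
    generalize qPI q q = Q at *
    generalize qPI (aF q) q = a at *
    generalize qPI (aF q * vF q) q = w at *
    generalize qPI (vF q) q = v at *
    field_simp
    ring
  rw [key, tsum_V h]
  generalize (∑' r, HR r q) = S
  generalize KR q = K
  unfold CF AF
  field_simp
  ring

/-- The double-pole contributions in `PA^{reg}` cancel at `q = 1/2`:
`PA^{reg}(q) - 1/(1-2q)` extends analytically to a neighbourhood of `1/2`, so
`PA^{reg}` has a simple pole there with singular part exactly `1/(1-2q)`. -/
theorem PAreg_simple_pole :
    ∃ g : ℂ → ℂ, AnalyticAt ℂ g (1 / 2 : ℂ) ∧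
      ∀ᶠ q in 𝓝[≠] (1 / 2 : ℂ), PAreg q = 1 / (1 - 2 * q) + g q := by
  have hB : Bd ∈ 𝓝 (1 / 2 : ℂ) := Metric.ball_mem_nhds _ (by norm_num)
  refine ⟨fun q => (3 * q - 1) / (1 - q) - 2 * q * (1 - q) ^ 2 * KR q * ∑' r, HR r q, ?_, ?_⟩
  · refine DifferentiableOn.analyticAt (s := Bd) ?_ hB
    intro q h
    obtain ⟨h1, h2, h3, h4, h5, h6, h7, h8⟩ := bnd h
    have n2 := ne_of_norm (by norm_num) h2
    have n4 := ne_of_norm (by norm_num) h4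
    have n8 := ne_of_norm (by norm_num) h8
    have hK : DifferentiableWithinAt ℂ KR Bd q := by
      unfold KR
      exact DifferentiableWithinAt.div (by fun_prop) (by fun_prop) (mul_ne_zero n2 n8)
    refine DifferentiableWithinAt.sub
      (DifferentiableWithinAt.div (by fun_prop) (by fun_prop) n4) ?_
    exact (DifferentiableWithinAt.mul (by fun_prop) hK).mul (SR_diff q h)
  · filter_upwards [mem_nhdsWithin_of_mem_nhds hB, self_mem_nhdsWithin] with q h hne
    refine PAreg_eq h ?_
    intro h0
    apply hne
    simp only [Set.mem_singleton_iff]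
    linear_combination (-1 / 2 : ℂ) * h0
end
end
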